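/- arXiv:0802.3320 — 4 statements merged into one kernel-verified Lean document; each statement's English description precedes it below -/
import Mathlib

section
/- For every t > 0, r ∈ [0, π/2), z ∈ [-π, π], one has the integral representation p_t(r, z) = (1/√(4πt)) · ∫_{-∞}^{+∞} e^{-(y+iz)²/(4t)} · q_t(cos r · cosh y) dy, where the equality is between complex numbers (the left side being real). -/
open Real

/-- The Jacobi polynomial `P_k^{0,m}` defined by the Rodrigues-type formula. -/
noncomputable def jacobiP (k m : ℕ) (x : ℝ) : ℝ :=
  ((-1 : ℝ) ^ k / (2 ^ k * (Nat.factorial k : ℝ) * (1 + x) ^ m)) *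
    iteratedDeriv k (fun y : ℝ => (1 + y) ^ m * (1 - y ^ 2) ^ k) x

/-- The general term of the double series defining the subelliptic heat kernel on `SU(2)`. -/
noncomputable def heatTerm (t r z : ℝ) (n : ℤ) (k : ℕ) : ℂ :=
  (((2 * (k : ℝ) + (n.natAbs : ℝ) + 1) *
      Real.exp (-(4 * (k : ℝ) * ((k : ℝ) + (n.natAbs : ℝ) + 1) + 2 * (n.natAbs : ℝ)) * t) *
      (Real.cos r) ^ n.natAbs * jacobiP k n.natAbs (Real.cos (2 * r)) : ℝ) : ℂ) *
    Complex.exp ((n : ℂ) * (z : ℂ) * Complex.I)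

/-- The subelliptic heat kernel `p_t(r,z)` on `SU(2)` in cylindric coordinates
(the double series is real-valued). -/
noncomputable def heatP (t r z : ℝ) : ℝ := (∑' n : ℤ, ∑' k : ℕ, heatTerm t r z n k).re

/-- The heat kernel `q_t(x) = Σ_{m=0}^∞ (m+1) e^{-m(m+2)t} U_m(x)` of the round 3-sphere,
where `U_m` is the Chebyshev polynomial of the second kind. -/
noncomputable def qKer (t x : ℝ) : ℝ :=
  ∑' m : ℕ, ((m : ℝ) + 1) * Real.exp (-((m : ℝ) * ((m : ℝ) + 2)) * t) *
    (Polynomial.Chebyshev.U ℝ (m : ℤ)).eval x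

noncomputable def dS (u : ℝ) (N j l : ℕ) : ℝ :=
  ∑ i ∈ Finset.range N, (j.choose i : ℝ) * (l.choose i : ℝ) * u ^ i

lemma dS_mono (u : ℝ) {N M j l : ℕ} (hN : j + 1 ≤ N) (hM : j + 1 ≤ M) :
    dS u N j l = dS u M j l := by
  have key : ∀ K, j + 1 ≤ K → dS u K j l = dS u (j+1) j l := by
    intro K hK
    unfold dS
    symm
    apply Finset.sum_subset
    · intro i hi
      simp only [Finset.mem_range] at *
      omega
    · intro i _ hi
      simp only [Finset.mem_range] at hi
      rw [Nat.choose_eq_zero_of_lt (by omega)]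
      simp
  rw [key N hN, key M hM]

lemma dS_comm (u : ℝ) (N j l : ℕ) : dS u N j l = dS u N l j := by
  unfold dS
  exact Finset.sum_congr rfl fun i _ => by ring

lemma dS_rec (u : ℝ) (N j l : ℕ) :
    dS u (N+1) (j+1) (l+1) = dS u (N+1) (j+1) l + dS u (N+1) j (l+1)
      - dS u (N+1) j l + u * dS u N j l := by
  unfold dS
  rw [Finset.sum_range_succ', Finset.sum_range_succ', Finset.sum_range_succ',
    Finset.sum_range_succ' (fun i => (j.choose i : ℝ) * (l.choose i : ℝ) * u ^ i), Finset.mul_sum]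
  have : ∀ i ∈ Finset.range N, ((j+1).choose (i+1) : ℝ) * ((l+1).choose (i+1) : ℝ) * u ^ (i+1) =
      ((j+1).choose (i+1) : ℝ) * (l.choose (i+1) : ℝ) * u ^ (i+1)
      + (j.choose (i+1) : ℝ) * ((l+1).choose (i+1) : ℝ) * u ^ (i+1)
      - (j.choose (i+1) : ℝ) * (l.choose (i+1) : ℝ) * u ^ (i+1)
      + u * ((j.choose i : ℝ) * (l.choose i : ℝ) * u ^ i) := by
    intro i _
    rw [Nat.choose_succ_succ j, Nat.choose_succ_succ l]
    push_cast
    ring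
  rw [Finset.sum_congr rfl this]
  simp only [Finset.sum_add_distrib, Finset.sum_sub_distrib]
  simp
  ring

noncomputable def dd (c : ℝ) (j l : ℕ) : ℝ :=
  c ^ (j + l) * dS (-(1 - c ^ 2) / c ^ 2) (j + l + 1) j l

lemma dd_comm (c : ℝ) (j l : ℕ) : dd c j l = dd c l j := by
  unfold dd
  rw [dS_comm, add_comm j l]

lemma dd_zero_right (c : ℝ) (j : ℕ) : dd c j 0 = c ^ j := by
  unfold dd
  rw [dS_comm, dS_mono (M := 1) _ (by omega) (by omega)]
  simp [dS]

lemma dd_zero_left (c : ℝ) (l : ℕ) : dd c 0 l = c ^ l := by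
  rw [dd_comm, dd_zero_right]

lemma dd_rec (c : ℝ) (hc : c ≠ 0) (j l : ℕ) :
    dd c (j+1) (l+1) = c * dd c (j+1) l + c * dd c j (l+1) - dd c j l := by
  unfold dd
  set u := -(1 - c ^ 2) / c ^ 2 with hu
  have hu' : c ^ 2 * (u - 1) = -1 := by rw [hu]; field_simp; ring
  rw [dS_mono (M := j + l + 3) u (N := j + 1 + (l+1) + 1) (by omega) (by omega),
    dS_mono (M := j + l + 3) u (N := j + 1 + l + 1) (by omega) (by omega),
    dS_mono (M := j + l + 3) u (N := j + (l+1) + 1) (by omega) (by omega),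
    dS_mono (M := j + l + 3) u (N := j + l + 1) (by omega) (by omega),
    dS_rec u (j+l+2) j l,
    dS_mono (M := j + l + 3) u (N := j + l + 2) (by omega) (by omega)]
  linear_combination (c ^ (j + l) * dS u (j + l + 3) j l) * hu'

lemma U_expand (c : ℝ) (hc : c ≠ 0) (a b : ℝ) (hab : a * b = 1) (m : ℕ) :
    (Polynomial.Chebyshev.U ℝ (m : ℤ)).eval (c * ((a + b) / 2)) =
      ∑ p ∈ Finset.HasAntidiagonal.antidiagonal m, dd c p.1 p.2 * a ^ p.1 * b ^ p.2 := by
  induction m using Nat.twoStepInduction with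
  | zero => simp [dd_zero_right]
  | one =>
    simp [Finset.Nat.sum_antidiagonal_succ, dd_zero_right, dd_zero_left]
    ring
  | more m h0 h1 =>
    have e : ((m + 2 : ℕ) : ℤ) = (m : ℤ) + 2 := by push_cast; ring
    have e1 : ((m + 1 : ℕ) : ℤ) = (m : ℤ) + 1 := by push_cast; ring
    rw [e, Polynomial.Chebyshev.U_add_two]
    rw [e1] at h1
    simp only [Polynomial.eval_sub, Polynomial.eval_mul, Polynomial.eval_X, Polynomial.eval_ofNat]
    rw [h0, h1]
    set F : ℕ × ℕ → ℝ := fun p => dd c p.1 p.2 * a ^ p.1 * b ^ p.2 with hF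
    have hrec : ∀ p : ℕ × ℕ, F (p.1 + 1, p.2 + 1) =
        c * a * F (p.1, p.2 + 1) + c * b * F (p.1 + 1, p.2) - F p := by
      intro p
      simp only [hF]
      rw [dd_rec c hc]
      linear_combination (-(dd c p.1 p.2) * a ^ p.1 * b ^ p.2) * hab
    have s1 := @Finset.Nat.sum_antidiagonal_succ' ℝ _ m F
    have s2 := @Finset.Nat.sum_antidiagonal_succ ℝ _ m F
    have s3 := @Finset.Nat.sum_antidiagonal_succ ℝ _ (m+1) F
    rw [@Finset.Nat.sum_antidiagonal_succ' ℝ _ m (fun p => F (p.1 + 1, p.2))] at s3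
    rw [Finset.sum_congr rfl (fun p _ => hrec p), Finset.sum_sub_distrib, Finset.sum_add_distrib,
      ← Finset.mul_sum, ← Finset.mul_sum] at s3
    have b1 : F (m + 1 + 1, 0) = c * a * F (m+1, 0) := by
      simp only [hF, dd_zero_right]; ring
    have b2 : F (0, m + 1 + 1) = c * b * F (0, m+1) := by
      simp only [hF, dd_zero_left]; ring
    rw [b1, b2] at s3
    change _ = ∑ p ∈ Finset.HasAntidiagonal.antidiagonal (m + 1 + 1), F p
    change 2 * (c * ((a + b) / 2)) * (∑ p ∈ Finset.HasAntidiagonal.antidiagonal (m+1), F p)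
      - (∑ p ∈ Finset.HasAntidiagonal.antidiagonal m, F p) = _
    rw [s3]
    linear_combination c * a * s1 + c * b * s2

lemma dd_bound (c : ℝ) (hc : 0 < c) (hc1 : c ≤ 1) (j l : ℕ) (hjl : j ≤ l) :
    |dd c j l| ≤ 3 ^ j := by
  unfold dd
  rw [dS_mono (M := j + 1) _ (by omega) (by omega)]
  unfold dS
  rw [Finset.mul_sum]
  refine (Finset.abs_sum_le_sum_abs _ _).trans ?_
  have h3 : (c + 2) ^ j ≤ (3:ℝ) ^ j := by gcongr; linarith
  refine le_trans ?_ h3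
  rw [add_comm c 2, add_pow]
  apply Finset.sum_le_sum
  intro i hi
  have hi' : i ≤ j := by simp only [Finset.mem_range] at hi; omega
  have hb : (1 - c) ^ i * c ^ (l - i) * (l.choose i : ℝ) ≤ 1 := by
    have := add_pow (1 - c) c l
    rw [show 1 - c + c = 1 by ring, one_pow] at this
    refine le_trans ?_ this.ge
    refine Finset.single_le_sum (s := Finset.range (l + 1)) (a := i)
      (f := fun i => (1 - c) ^ i * c ^ (l - i) * (l.choose i : ℝ)) (fun k _ => ?_)
      (Finset.mem_range.2 (by omega))
    have : 0 ≤ 1 - c := by linarith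
    positivity
  have e : c ^ (j + l) * ((j.choose i : ℝ) * (l.choose i : ℝ) * (-(1 - c ^ 2) / c ^ 2) ^ i)
      = (-1) ^ i * (((1 - c) ^ i * c ^ (l - i) * (l.choose i : ℝ)) *
        ((1 + c) ^ i * c ^ (j - i) * (j.choose i : ℝ))) := by
    obtain ⟨a, rfl⟩ := Nat.exists_eq_add_of_le hi'
    obtain ⟨b, rfl⟩ := Nat.exists_eq_add_of_le (hi'.trans hjl)
    rw [show -(1 - c^2) / c^2 = (-1) * ((1 - c) * (1 + c)) / c^2 by ring, div_pow, mul_pow, mul_pow]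
    simp only [Nat.add_sub_cancel_left]
    field_simp
    ring
  have h1c : 0 ≤ 1 - c := by linarith
  rw [e, abs_mul, abs_pow, abs_neg, abs_one, one_pow, one_mul, abs_of_nonneg (by positivity)]
  calc _ ≤ 1 * ((1 + c) ^ i * c ^ (j - i) * (j.choose i : ℝ)) := by gcongr
    _ ≤ _ := by rw [one_mul]; gcongr; linarith

lemma jacobi_dd (r : ℝ) (hc : 0 < Real.cos r) (n k : ℕ) :
    Real.cos r ^ n * jacobiP k n (Real.cos (2 * r)) = dd (Real.cos r) k (n + k) := by
  set c := Real.cos r with hcdef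
  have hx : Real.cos (2 * r) = 2 * c ^ 2 - 1 := Real.cos_two_mul r
  rw [hx]
  unfold jacobiP dd
  have hfun : (fun y : ℝ => (1 + y) ^ n * (1 - y ^ 2) ^ k)
      = fun y => (fun y => (1 + y) ^ (n + k)) y * (fun y => (1 - y) ^ k) y := by
    funext y
    simp only
    rw [show 1 - y ^ 2 = (1 + y) * (1 - y) by ring, mul_pow]
    ring
  rw [hfun, iteratedDeriv_fun_mul (by fun_prop) (by fun_prop),
    dS_mono (M := k + 1) _ (by omega) (by omega)]
  unfold dS
  rw [Finset.mul_sum, Finset.mul_sum, Finset.mul_sum]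
  apply Finset.sum_congr rfl
  intro i hi
  have hi' : i ≤ k := by simp only [Finset.mem_range] at hi; omega
  rw [iteratedDeriv_comp_const_add i (fun y : ℝ => y ^ (n + k)) 1,
    iteratedDeriv_comp_const_sub (k - i) (fun y : ℝ => y ^ k) 1]
  simp only [iteratedDeriv_pow, smul_eq_mul]
  rw [show 1 - (2 * c ^ 2 - 1) = 2 * (1 - c ^ 2) by ring, show 1 + (2 * c ^ 2 - 1) = 2 * c ^ 2 by ring]
  have hd1 : ((n + k).descFactorial i : ℝ) = (i.factorial : ℝ) * ((n + k).choose i : ℝ) := by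
    rw [Nat.descFactorial_eq_factorial_mul_choose]; push_cast; ring
  have hd2 : (k.descFactorial (k - i) : ℝ) * (i.factorial : ℝ) = (k.factorial : ℝ) := by
    have := Nat.factorial_mul_descFactorial (n := k) (k := k - i) (by omega)
    rw [Nat.sub_sub_self hi'] at this
    rw [← this]; push_cast; ring
  rw [hd1, ← hd2, Nat.sub_sub_self hi']
  obtain ⟨a, rfl⟩ := Nat.exists_eq_add_of_le hi'
  simp only [Nat.add_sub_cancel_left]
  have hf : (i.factorial : ℝ) ≠ 0 := by positivity
  have hf2 : ((i + a).descFactorial a : ℝ) ≠ 0 := by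
    have : 0 < (i+a).descFactorial a := Nat.pos_of_ne_zero (by
      rw [Ne, Nat.descFactorial_eq_zero_iff_lt]; omega)
    positivity
  rw [show n + (i + a) - i = n + a by omega]
  rw [show -(1 - c ^ 2) / c ^ 2 = (-1) * (1 - c ^ 2) / c ^ 2 by ring, div_pow]
  simp only [mul_pow]
  field_simp
  have h1 : (-1 : ℝ) ^ (i + a) * (-1) ^ a = (-1) ^ i := by
    rw [pow_add, mul_assoc, ← pow_add, ← two_mul, pow_mul]; simp
  rw [← h1]
  ring
def cEq : ℤ × ℕ ≃ ℕ × ℕ where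
  toFun p := (p.2 + (-p.1).toNat, p.2 + p.1.toNat)
  invFun q := ((q.2 : ℤ) - q.1, min q.1 q.2)
  left_inv := by
    rintro ⟨n, k⟩
    ext
    · simp only
      omega
    · simp only
      omega
  right_inv := by
    rintro ⟨j, l⟩
    ext
    · simp only
      omega
    · simp only
      omega

noncomputable def coef (t c : ℝ) (p : ℤ × ℕ) : ℝ :=
  (2 * (p.2 : ℝ) + (p.1.natAbs : ℝ) + 1) *
    Real.exp (-(4 * (p.2 : ℝ) * ((p.2 : ℝ) + (p.1.natAbs : ℝ) + 1) + 2 * (p.1.natAbs : ℝ)) * t) *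
    dd c p.2 (p.1.natAbs + p.2)

lemma summable_aux1 (t : ℝ) (ht : 0 < t) :
    Summable fun n : ℤ => ((n.natAbs : ℝ) + 1) * Real.exp (-(2 * (n.natAbs : ℝ)) * t) := by
  have h : Summable fun n : ℕ => ((n : ℝ) + 1) * Real.exp (-(2 * (n : ℝ)) * t) := by
    have h1 := Real.summable_pow_mul_exp_neg_nat_mul 1 (r := 2 * t) (by positivity)
    have h0 := Real.summable_pow_mul_exp_neg_nat_mul 0 (r := 2 * t) (by positivity)
    refine (h1.add h0).congr fun n => ?_
    rw [show -(2 * t) * (n : ℝ) = -(2 * (n : ℝ)) * t by ring]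
    ring
  apply Summable.of_nat_of_neg
  · simpa using h
  · simpa using h

lemma summable_aux2 (t : ℝ) (ht : 0 < t) :
    Summable fun k : ℕ => (2 * (k : ℝ) + 1) * 3 ^ k * Real.exp (-(4 * (k : ℝ) * k) * t) := by
  obtain ⟨K, hK⟩ := exists_nat_gt ((Real.log 3 + 1) / (4 * t))
  have h : Summable fun n : ℕ => (2 * (n : ℝ) + 1) * Real.exp (-1 * (n : ℝ)) := by
    have h1 := Real.summable_pow_mul_exp_neg_nat_mul 1 (r := 1) (by positivity)
    have h0 := Real.summable_pow_mul_exp_neg_nat_mul 0 (r := 1) (by positivity)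
    refine ((h1.mul_left 2).add h0).congr fun n => ?_
    ring
  refine Summable.of_norm_bounded_eventually_nat h ?_
  filter_upwards [Filter.eventually_ge_atTop K] with k hk
  rw [Real.norm_of_nonneg (by positivity), mul_assoc]
  gcongr
  have h3 : (3 : ℝ) ^ k = Real.exp (Real.log 3 * k) := by
    rw [mul_comm, Real.exp_nat_mul, Real.exp_log (by norm_num)]
  rw [h3, ← Real.exp_add]
  apply Real.exp_le_exp.2
  rw [div_lt_iff₀ (by positivity)] at hK
  have hk' : (K : ℝ) ≤ k := by exact_mod_cast hk
  have : Real.log 3 + 1 ≤ k * (4 * t) := hK.le.trans (by gcongr)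
  nlinarith [mul_le_mul_of_nonneg_left this (Nat.cast_nonneg (α := ℝ) k)]

lemma coef_summable (t c : ℝ) (ht : 0 < t) (hc : 0 < c) (hc1 : c ≤ 1) :
    Summable fun p : ℤ × ℕ => |coef t c p| := by
  have h := (summable_aux1 t ht).mul_of_nonneg (summable_aux2 t ht)
    (fun _ => by positivity) (fun _ => by positivity)
  refine Summable.of_nonneg_of_le (fun _ => abs_nonneg _) (fun p => ?_) h
  obtain ⟨n, k⟩ := p
  unfold coef
  simp only
  set N : ℝ := (n.natAbs : ℝ) with hN
  have hN0 : 0 ≤ N := by positivity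
  have hk0 : (0 : ℝ) ≤ k := by positivity
  rw [abs_mul, abs_of_nonneg (by positivity)]
  have hd := dd_bound c hc hc1 k (n.natAbs + k) (by omega)
  calc _ ≤ ((N + 1) * (2 * k + 1)) * (Real.exp (-(2 * N) * t) * Real.exp (-(4 * (k:ℝ) * k) * t))
        * 3 ^ k := by
        gcongr
        · nlinarith [mul_nonneg hN0 hk0]
        · rw [← Real.exp_add]
          apply Real.exp_le_exp.2
          have : 0 ≤ (4 * (k:ℝ) * (N + 1)) * t := by positivity
          nlinarith
    _ = _ := by ring

lemma quad_bound (t : ℝ) (ht : 0 < t) (n y : ℝ) : -(n ^ 2) * t - n * y ≤ y ^ 2 / (4 * t) := by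
  rw [le_div_iff₀ (by positivity)]
  nlinarith [sq_nonneg (2 * n * t + y)]

lemma term_eq (t c y : ℝ) (p : ℤ × ℕ) :
    coef t c p * Real.exp (-((p.1 : ℝ) ^ 2) * t - p.1 * y) =
      ((((cEq p).1 + (cEq p).2 : ℕ) : ℝ) + 1) *
        Real.exp (-((((cEq p).1 + (cEq p).2 : ℕ) : ℝ) * ((((cEq p).1 + (cEq p).2 : ℕ) : ℝ) + 2)) * t)
        * (dd c (cEq p).1 (cEq p).2 * Real.exp y ^ (cEq p).1 * Real.exp (-y) ^ (cEq p).2) := by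
  obtain ⟨n, k⟩ := p
  have hdd : dd c (cEq (n, k)).1 (cEq (n, k)).2 = dd c k (n.natAbs + k) := by
    simp only [cEq, Equiv.coe_fn_mk]
    rcases le_total 0 n with h | h
    · rw [show k + (-n).toNat = k by omega, show k + n.toNat = n.natAbs + k by omega]
    · rw [show k + (-n).toNat = n.natAbs + k by omega, show k + n.toNat = k by omega, dd_comm]
  have hsum : ((cEq (n, k)).1 + (cEq (n, k)).2 : ℕ) = 2 * k + n.natAbs := by
    simp only [cEq, Equiv.coe_fn_mk]
    omega
  have hdiff : ((cEq (n, k)).1 : ℝ) - ((cEq (n, k)).2 : ℝ) = - (n : ℝ) := by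
    have : ((cEq (n, k)).1 : ℤ) - ((cEq (n, k)).2 : ℤ) = - n := by
      simp only [cEq, Equiv.coe_fn_mk]
      omega
    exact_mod_cast this
  have hsq : (n : ℝ) ^ 2 = (n.natAbs : ℝ) ^ 2 := by
    rw [Nat.cast_natAbs, Int.cast_abs, sq_abs]
  have hexp : Real.exp y ^ (cEq (n, k)).1 * Real.exp (-y) ^ (cEq (n, k)).2 = Real.exp (-n * y) := by
    rw [← Real.exp_nat_mul, ← Real.exp_nat_mul, ← Real.exp_add, ← hdiff]
    ring_nf
  rw [mul_assoc (dd c _ _), hexp, hdd, hsum]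
  unfold coef
  simp only
  rw [hsq, sub_eq_add_neg, Real.exp_add, ← neg_mul]
  have : Real.exp (-((((2 * k + n.natAbs : ℕ) : ℝ)) * (((2 * k + n.natAbs : ℕ) : ℝ) + 2)) * t) =
    Real.exp (-(4 * (k : ℝ) * ((k : ℝ) + (n.natAbs : ℝ) + 1) + 2 * (n.natAbs : ℝ)) * t) *
      Real.exp (-((n.natAbs : ℝ) ^ 2) * t) := by
    rw [← Real.exp_add]
    push_cast
    ring_nf
  rw [this]
  push_cast
  ring

lemma qKer_hasSum (t c y : ℝ) (ht : 0 < t) (hc : 0 < c) (hc1 : c ≤ 1) :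
    HasSum (fun p : ℤ × ℕ => coef t c p * Real.exp (-((p.1 : ℝ) ^ 2) * t - p.1 * y))
      (qKer t (c * Real.cosh y)) := by
  have hs : Summable (fun p : ℤ × ℕ => coef t c p * Real.exp (-((p.1 : ℝ) ^ 2) * t - p.1 * y)) := by
    refine Summable.of_norm_bounded ((coef_summable t c ht hc hc1).mul_right
      (Real.exp (y ^ 2 / (4 * t)))) fun p => ?_
    rw [norm_mul, Real.norm_eq_abs, Real.norm_of_nonneg (Real.exp_nonneg _)]
    gcongr
    exact quad_bound t ht _ _
  set g : ℕ × ℕ → ℝ := fun q => (((q.1 + q.2 : ℕ) : ℝ) + 1) *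
        Real.exp (-(((q.1 + q.2 : ℕ) : ℝ) * (((q.1 + q.2 : ℕ) : ℝ) + 2)) * t)
        * (dd c q.1 q.2 * Real.exp y ^ q.1 * Real.exp (-y) ^ q.2) with hg
  have hfg : (fun p : ℤ × ℕ => coef t c p * Real.exp (-((p.1 : ℝ) ^ 2) * t - p.1 * y)) = g ∘ cEq :=
    funext fun p => term_eq t c y p
  rw [hfg] at hs ⊢
  have hgs : Summable g := cEq.summable_iff.1 hs
  have hkey : qKer t (c * Real.cosh y) = ∑' q, g q := by
    rw [← Finset.HasAntidiagonal.sigmaAntidiagonalEquivProd.tsum_eq g]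
    change _ = ∑' x, (g ∘ Finset.HasAntidiagonal.sigmaAntidiagonalEquivProd) x
    rw [Summable.tsum_sigma' (fun n => (hasSum_fintype _).summable)
      (Finset.HasAntidiagonal.sigmaAntidiagonalEquivProd.summable_iff.2 hgs)]
    unfold qKer
    refine tsum_congr fun m => ?_
    rw [tsum_fintype]
    simp only [Function.comp_apply, Finset.HasAntidiagonal.sigmaAntidiagonalEquivProd_apply]
    rw [Finset.sum_coe_sort (Finset.HasAntidiagonal.antidiagonal m) g, Real.cosh_eq,
      U_expand c hc.ne' _ _ (by rw [← Real.exp_add]; simp), Finset.mul_sum]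
    refine Finset.sum_congr rfl fun p hp => ?_
    rw [Finset.HasAntidiagonal.mem_antidiagonal] at hp
    simp only [hg, hp]
  rw [hkey]
  exact cEq.hasSum_iff.2 hgs.hasSum
lemma gauss_re (t z y : ℝ) (ht : 0 < t) (n : ℤ) :
    Complex.exp (-((y : ℂ) + (z : ℂ) * Complex.I) ^ 2 / (4 * (t : ℂ))) *
      ((Real.exp (-((n : ℝ) ^ 2) * t - n * y) : ℝ) : ℂ) =
    Complex.exp (((-1 / (4 * t) : ℝ) : ℂ) * (y : ℂ) ^ 2 +
      (-(z : ℂ) * Complex.I / (2 * t) - n) * y + ((z : ℂ) ^ 2 / (4 * t) - n ^ 2 * t)) := by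
  have ht' : (t : ℂ) ≠ 0 := by exact_mod_cast ht.ne'
  rw [Complex.ofReal_exp, ← Complex.exp_add]
  congr 1
  push_cast
  field_simp
  linear_combination (-2*(z:ℂ)^2) * Complex.I_sq

lemma gauss_int (t z : ℝ) (ht : 0 < t) (n : ℤ) :
    ∫ y : ℝ, Complex.exp (-((y : ℂ) + (z : ℂ) * Complex.I) ^ 2 / (4 * (t : ℂ))) *
      ((Real.exp (-((n : ℝ) ^ 2) * t - n * y) : ℝ) : ℂ) =
    (Real.sqrt (4 * Real.pi * t) : ℂ) * Complex.exp ((n : ℂ) * (z : ℂ) * Complex.I) := by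
  have ht' : (t : ℂ) ≠ 0 := by exact_mod_cast ht.ne'
  simp_rw [gauss_re t z _ ht n]
  rw [integral_cexp_quadratic (by
    rw [Complex.ofReal_re]; exact div_neg_of_neg_of_pos (by norm_num) (by positivity))]
  congr 1
  · rw [Real.sqrt_eq_rpow, Complex.ofReal_cpow (by positivity)]
    congr 1
    · push_cast
      field_simp
    · push_cast; rfl
  · congr 1
    push_cast
    field_simp
    linear_combination (4 * (z:ℂ)^2) * Complex.I_sq

lemma gauss_integrable (t z : ℝ) (ht : 0 < t) (n : ℤ) :
    MeasureTheory.Integrable fun y : ℝ =>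
      Complex.exp (-((y : ℂ) + (z : ℂ) * Complex.I) ^ 2 / (4 * (t : ℂ))) *
      ((Real.exp (-((n : ℝ) ^ 2) * t - n * y) : ℝ) : ℂ) := by
  simp_rw [gauss_re t z _ ht n]
  exact integrable_cexp_quadratic' (by
    rw [Complex.ofReal_re]; exact div_neg_of_neg_of_pos (by norm_num) (by positivity)) _ _

lemma gauss_norm (t z : ℝ) (ht : 0 < t) (n : ℤ) :
    ∫ y : ℝ, ‖Complex.exp (-((y : ℂ) + (z : ℂ) * Complex.I) ^ 2 / (4 * (t : ℂ))) *
      ((Real.exp (-((n : ℝ) ^ 2) * t - n * y) : ℝ) : ℂ)‖ =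
    Real.exp (z ^ 2 / (4 * t)) * Real.sqrt (4 * Real.pi * t) := by
  have h0 := gauss_int t 0 ht n
  have e : ∀ y : ℝ, ((‖Complex.exp (-((y : ℂ) + (z : ℂ) * Complex.I) ^ 2 / (4 * (t : ℂ))) *
      ((Real.exp (-((n : ℝ) ^ 2) * t - n * y) : ℝ) : ℂ)‖ : ℝ) : ℂ) =
      ((Real.exp (z ^ 2 / (4 * t)) : ℝ) : ℂ) *
      (Complex.exp (-((y : ℂ) + ((0 : ℝ) : ℂ) * Complex.I) ^ 2 / (4 * (t : ℂ))) *
      ((Real.exp (-((n : ℝ) ^ 2) * t - n * y) : ℝ) : ℂ)) := by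
    intro y
    rw [norm_mul, Complex.norm_real, Real.norm_of_nonneg (Real.exp_nonneg _), Complex.norm_exp]
    have h1 : (-((y : ℂ) + (z : ℂ) * Complex.I) ^ 2 / (4 * (t : ℂ))).re
        = z ^ 2 / (4 * t) + -y ^ 2 / (4 * t) := by
      have : (-((y : ℂ) + (z : ℂ) * Complex.I) ^ 2 / (4 * (t : ℂ))) =
        ((z ^ 2 / (4 * t) + -y ^ 2 / (4 * t) : ℝ) : ℂ) + ((-(2 * y * z) / (4 * t) : ℝ) : ℂ) * Complex.I := by
        have ht' : (t : ℂ) ≠ 0 := by exact_mod_cast ht.ne'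
        push_cast
        field_simp
        linear_combination (-(z:ℂ)^2) * Complex.I_sq
      rw [this]
      simp only [Complex.add_re, Complex.ofReal_re, Complex.re_ofReal_mul, Complex.I_re]
      ring
    rw [h1, Real.exp_add]
    push_cast
    simp
    ring
  have := integral_ofReal (𝕜 := ℂ) (μ := MeasureTheory.volume)
    (f := fun y : ℝ => ‖Complex.exp (-((y : ℂ) + (z : ℂ) * Complex.I) ^ 2 / (4 * (t : ℂ))) *
      ((Real.exp (-((n : ℝ) ^ 2) * t - n * y) : ℝ) : ℂ)‖)
  apply Complex.ofReal_injective
  refine this.symm.trans ?_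
  refine (MeasureTheory.integral_congr_ae (Filter.Eventually.of_forall e)).trans ?_
  rw [MeasureTheory.integral_const_mul, h0]
  simp


/-- Integral representation of the subelliptic heat kernel:
`p_t(r,z) = (1/√(4πt)) ∫_ℝ e^{-(y+iz)²/(4t)} q_t(cos r cosh y) dy`. -/
theorem stmt_7 (t : ℝ) (ht : 0 < t) (r : ℝ) (hr : r ∈ Set.Ico 0 (Real.pi / 2))
    (z : ℝ) (hz : z ∈ Set.Icc (-Real.pi) Real.pi) :
    (heatP t r z : ℂ) =
      ((1 / Real.sqrt (4 * Real.pi * t) : ℝ) : ℂ) *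
        ∫ y : ℝ, Complex.exp (-((y : ℂ) + (z : ℂ) * Complex.I) ^ 2 / (4 * (t : ℂ))) *
          ((qKer t (Real.cos r * Real.cosh y) : ℝ) : ℂ) := by
  have hc : 0 < Real.cos r :=
    Real.cos_pos_of_mem_Ioo ⟨by linarith [hr.1, Real.pi_pos], hr.2⟩
  have hc1 := Real.cos_le_one r
  set c := Real.cos r with hcdef
  have hterm : ∀ p : ℤ × ℕ, heatTerm t r z p.1 p.2 =
      (coef t c p : ℂ) * Complex.exp ((p.1 : ℂ) * (z : ℂ) * Complex.I) := by
    intro p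
    unfold heatTerm coef
    rw [mul_assoc _ (Real.cos r ^ _), jacobi_dd r hc]
  have hcs := coef_summable t c ht hc hc1
  have hsum : Summable fun p : ℤ × ℕ => heatTerm t r z p.1 p.2 := by
    refine Summable.of_norm_bounded hcs fun p => ?_
    rw [hterm, norm_mul, Complex.norm_real, Real.norm_eq_abs,
      show (p.1 : ℂ) * (z : ℂ) * Complex.I = ((p.1 * z : ℝ) : ℂ) * Complex.I by push_cast; ring,
      Complex.norm_exp_ofReal_mul_I, mul_one]
  have hconj : (starRingEnd ℂ) (∑' p : ℤ × ℕ, heatTerm t r z p.1 p.2) =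
      ∑' p : ℤ × ℕ, heatTerm t r z p.1 p.2 := by
    rw [Complex.conj_tsum,
      ← ((Equiv.neg ℤ).prodCongr (Equiv.refl ℕ)).tsum_eq (fun p : ℤ × ℕ => heatTerm t r z p.1 p.2)]
    refine tsum_congr fun p => ?_
    rw [hterm, hterm, map_mul, Complex.conj_ofReal, ← Complex.exp_conj]
    simp [coef]
  have hP : (heatP t r z : ℂ) = ∑' p : ℤ × ℕ, heatTerm t r z p.1 p.2 := by
    unfold heatP
    rw [← Summable.tsum_prod hsum]
    exact Complex.conj_eq_iff_re.1 hconj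
  have hsq : Real.sqrt (4 * Real.pi * t) ≠ 0 := by positivity
  have hI := MeasureTheory.hasSum_integral_of_summable_integral_norm
    (μ := MeasureTheory.volume)
    (F := fun (p : ℤ × ℕ) (y : ℝ) => (coef t c p : ℂ) *
      (Complex.exp (-((y : ℂ) + (z : ℂ) * Complex.I) ^ 2 / (4 * (t : ℂ))) *
      ((Real.exp (-((p.1 : ℝ) ^ 2) * t - p.1 * y) : ℝ) : ℂ)))
    (fun p => (gauss_integrable t z ht p.1).const_mul _)
    (by
      refine (hcs.mul_right (Real.exp (z ^ 2 / (4 * t)) * Real.sqrt (4 * Real.pi * t))).congr ?_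
      intro p
      simp_rw [norm_mul (coef t c p : ℂ)]
      rw [MeasureTheory.integral_const_mul, gauss_norm t z ht, Complex.norm_real, Real.norm_eq_abs])
  have hint : ∀ y : ℝ, ∑' p : ℤ × ℕ, (coef t c p : ℂ) *
      (Complex.exp (-((y : ℂ) + (z : ℂ) * Complex.I) ^ 2 / (4 * (t : ℂ))) *
      ((Real.exp (-((p.1 : ℝ) ^ 2) * t - p.1 * y) : ℝ) : ℂ)) =
      Complex.exp (-((y : ℂ) + (z : ℂ) * Complex.I) ^ 2 / (4 * (t : ℂ))) *
          ((qKer t (c * Real.cosh y) : ℝ) : ℂ) := by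
    intro y
    have h := (Complex.hasSum_ofReal.2 (qKer_hasSum t c y ht hc hc1)).mul_left
      (Complex.exp (-((y : ℂ) + (z : ℂ) * Complex.I) ^ 2 / (4 * (t : ℂ))))
    rw [← h.tsum_eq]
    refine tsum_congr fun p => ?_
    push_cast
    ring
  simp_rw [hint] at hI
  rw [hP, ← hI.tsum_eq, ← tsum_mul_left]
  refine tsum_congr fun p => ?_
  rw [hterm, MeasureTheory.integral_const_mul, gauss_int t z ht]
  have : (Real.sqrt (4 * Real.pi * t) : ℂ) ≠ 0 := by exact_mod_cast hsq
  push_cast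
  field_simp
end

section
/- For every t > 0 and every z ∈ [0, π), one has the exact formula p_t(0, z) = (π² e^t / (4t²)) · e^{-(2πz - z²)/(4t)} · Σ_{k∈ℤ} e^{-k(k+1)π²/t} · ((2k+1) + 2k·e^{-(π/(2t))(z+2kπ)}) / (1 + e^{-(π/(2t))(z+2kπ)})². -/
open Real

namespace SU2

lemma jacobiP_one (k m : ℕ) : jacobiP k m 1 = 1 := by
  obtain ⟨R₂, -, h⟩ := iteratedDeriv_mul_pow_sub_of_analytic (𝕜 := ℝ) (k := k) (t := 0) (z₀ := 1)
    (R := fun y : ℝ => (1 + y) ^ m * (1 - y ^ 2) ^ k)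
    (R₁ := fun y : ℝ => (-1) ^ k * (1 + y) ^ (m + k))
    (fun z => by fun_prop)
    (fun z => by
      have : (1 - z ^ 2) = (-1) * ((z - 1) * (1 + z)) := by ring
      rw [this, mul_pow, mul_pow, add_zero, pow_add]; ring)
  have h1 := h 1
  rw [jacobiP, h1]
  have : (Nat.factorial k : ℝ) ≠ 0 := by exact_mod_cast Nat.factorial_ne_zero k
  simp only [sub_self, zero_mul, add_zero, pow_zero, Nat.factorial_zero, Nat.cast_one, div_one, one_mul]
  have h2 : ((1:ℝ) + 1) = 2 := by norm_num
  rw [h2, pow_add]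
  have h3 : ((-1 : ℝ) ^ k) * (-1) ^ k = 1 := by rw [← mul_pow]; norm_num
  field_simp
  rw [sq, h3]

/-- generic convolution -/
lemma conv {f g : ℤ → ℂ} (hf : Summable f) (hg : Summable g) :
    (∀ n, Summable fun m => f m * g (n - m)) ∧ (Summable fun n => ∑' m, f m * g (n - m)) ∧
    (∑' m, f m) * (∑' m, g m) = ∑' n, ∑' m, f m * g (n - m) := by
  let e : ℤ × ℤ ≃ ℤ × ℤ :=
    { toFun := fun p => (p.2, p.1 - p.2), invFun := fun p => (p.1 + p.2, p.1)
      left_inv := fun p => by ext <;> simp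
      right_inv := fun p => by ext <;> simp }
  have h := summable_mul_of_summable_norm hf.norm hg.norm
  have hprod : Summable fun p : ℤ × ℤ => f p.2 * g (p.1 - p.2) := (e.summable_iff (f := fun p : ℤ × ℤ => f p.1 * g p.2)).2 h
  refine ⟨fun n => hprod.prod_factor n, hprod.prod, ?_⟩
  rw [tsum_mul_tsum_of_summable_norm hf.norm hg.norm, ← e.tsum_eq]
  exact hprod.tsum_prod

/-- the nonneg coefficients -/
noncomputable def A (q : ℝ) (n : ℕ) : ℝ := ∑' k : ℕ, (2 * (k : ℝ) + n + 1) * q ^ (k * (k + n + 1))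

lemma summable_lin {x : ℝ} (h0 : 0 ≤ x) (h1 : x < 1) : Summable fun k : ℕ => (2 * (k : ℝ) + 1) * x ^ k := by
  have a := summable_pow_mul_geometric_of_norm_lt_one 1 (r := x) (by rwa [Real.norm_of_nonneg h0])
  have b := summable_geometric_of_lt_one h0 h1
  refine ((a.mul_left 2).add b).congr fun k => ?_
  simp; ring

lemma term_nonneg {q : ℝ} (h0 : 0 < q) (k n : ℕ) : 0 ≤ (2 * (k : ℝ) + n + 1) * q ^ (k * (k + n + 1)) := by
  positivity

lemma term_le {q : ℝ} (h0 : 0 < q) (h1 : q < 1) (k n : ℕ) :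
    (2 * (k : ℝ) + n + 1) * q ^ (k * (k + n + 1)) ≤ (n + 1) * ((2 * (k : ℝ) + 1) * q ^ k) := by
  rw [← mul_assoc]
  gcongr ?_ * ?_
  · have : 0 ≤ (k : ℝ) * n := by positivity
    nlinarith
  · exact pow_le_pow_of_le_one h0.le h1.le (by nlinarith)

lemma summable_A {q : ℝ} (h0 : 0 < q) (h1 : q < 1) (n : ℕ) :
    Summable fun k : ℕ => (2 * (k : ℝ) + n + 1) * q ^ (k * (k + n + 1)) :=
  Summable.of_nonneg_of_le (term_nonneg h0 · n) (term_le h0 h1 · n) ((summable_lin h0.le h1).mul_left _)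

lemma A_nonneg {q : ℝ} (h0 : 0 < q) (n : ℕ) : 0 ≤ A q n := tsum_nonneg (term_nonneg h0 · n)

lemma A_le {q : ℝ} (h0 : 0 < q) (h1 : q < 1) : ∃ K : ℝ, 0 ≤ K ∧ ∀ n, A q n ≤ K * (2 * n + 1) := by
  refine ⟨∑' k : ℕ, (2 * (k : ℝ) + 1) * q ^ k, tsum_nonneg fun k => by positivity, fun n => ?_⟩
  have h : A q n ≤ ∑' k : ℕ, (n + 1) * ((2 * (k : ℝ) + 1) * q ^ k) :=
    (summable_A h0 h1 n).tsum_le_tsum (term_le h0 h1 · n) ((summable_lin h0.le h1).mul_left _)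
  rw [tsum_mul_left, mul_comm] at h
  refine h.trans ?_
  gcongr
  have : (0:ℝ) ≤ n := by positivity
  linarith

lemma A_rec {q : ℝ} (h0 : 0 < q) (h1 : q < 1) (n : ℕ) : A q n = (n + 1) + q ^ (n + 2) * A q (n + 2) := by
  rw [A, (summable_A h0 h1 n).tsum_eq_zero_add, A, ← tsum_mul_left]
  congr 1
  · simp
  · congr 1 with k
    have : (k + 1) * (k + 1 + n + 1) = (n + 2) + k * (k + (n + 2) + 1) := by ring
    rw [this, pow_add]; push_cast; ring

/-- all Laurent coefficients -/
noncomputable def F (q : ℝ) (n : ℤ) : ℝ := q ^ (-n).toNat * A q n.natAbs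

lemma F_nat (q : ℝ) (n : ℕ) : F q n = A q n := by simp [F]
lemma F_neg (q : ℝ) (n : ℕ) : F q (-n) = q ^ n * A q n := by simp [F]

lemma F_rec {q : ℝ} (h0 : 0 < q) (h1 : q < 1) (n : ℤ) : F q n = (n + 1) + q ^ (n + 2) * F q (n + 2) := by
  rcases lt_or_ge n 0 with h | h
  · obtain ⟨m, rfl⟩ : ∃ m : ℕ, n = -(m + 1 : ℕ) := ⟨(-n - 1).toNat, by omega⟩
    rw [F_neg]
    rcases m with _ | m
    · have : -((0 + 1 : ℕ) : ℤ) + 2 = (1 : ℕ) := by norm_num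
      rw [this, F_nat]; simp
    · have : -((m + 1 + 1 : ℕ) : ℤ) + 2 = -(m : ℕ) := by push_cast; ring
      rw [this, F_neg, ← mul_assoc, zpow_neg, zpow_natCast, inv_mul_cancel₀ (by positivity), A_rec h0 h1 m]
      push_cast; ring
  · obtain ⟨m, rfl⟩ := Int.eq_ofNat_of_zero_le h
    have : (m : ℤ) + 2 = (m + 2 : ℕ) := by push_cast; ring
    rw [this, F_nat, F_nat, zpow_natCast, A_rec h0 h1 m]; simp

lemma summable_F {q : ℝ} (h0 : 0 < q) (h1 : q < 1) {v : ℂ} (hv : q < ‖v‖) (hv1 : ‖v‖ < 1) :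
    Summable fun n : ℤ => (F q n : ℂ) * v ^ n := by
  obtain ⟨K, hK, hA⟩ := A_le h0 h1
  have v0 : 0 < ‖v‖ := h0.trans hv
  apply Summable.of_nat_of_neg
  · refine Summable.of_norm_bounded ((summable_lin v0.le hv1).mul_left K) fun n => ?_
    rw [F_nat, norm_mul, zpow_natCast, norm_pow, Complex.norm_real, Real.norm_of_nonneg (A_nonneg h0 n), ← mul_assoc]
    gcongr
    exact hA n
  · refine Summable.of_norm_bounded ((summable_lin (x := q / ‖v‖) (by positivity) ((div_lt_one v0).2 hv)).mul_left K) fun n => ?_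
    rw [F_neg, norm_mul, zpow_neg, zpow_natCast, norm_inv, norm_pow, Complex.norm_real,
      Real.norm_of_nonneg (mul_nonneg (by positivity) (A_nonneg h0 n)), div_pow]
    calc q ^ n * A q n * (‖v‖ ^ n)⁻¹ ≤ q ^ n * (K * (2 * n + 1)) * (‖v‖ ^ n)⁻¹ := by gcongr; exact hA n
      _ = _ := by rw [div_eq_mul_inv]; ring

/-- theta coefficients, `τ = i T`. -/
noncomputable def a (T : ℝ) (m : ℤ) : ℂ := jacobiTheta₂_term m (1/2 - (T * Complex.I) / 2) (T * Complex.I)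

noncomputable def qq (T : ℝ) : ℝ := Real.exp (-2 * π * T)

lemma qq_pos (T : ℝ) : 0 < qq T := Real.exp_pos _
lemma qq_lt {T : ℝ} (hT : 0 < T) : qq T < 1 := by
  rw [qq, Real.exp_lt_one_iff]; have := mul_pos pi_pos hT; linarith

lemma a_mul (T : ℝ) (m : ℤ) (s : ℂ) : a T m * (Complex.exp (2 * π * Complex.I * s)) ^ m =
    jacobiTheta₂_term m (s + 1/2 - (T * Complex.I) / 2) (T * Complex.I) := by
  rw [a, jacobiTheta₂_term, jacobiTheta₂_term, ← Complex.exp_int_mul, ← Complex.exp_add]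
  congr 1; ring

lemma a_succ (T : ℝ) (m : ℤ) : a T (m + 1) = -((qq T : ℂ)) ^ m * a T m := by
  have h1 : ((qq T : ℂ)) ^ m = Complex.exp (m * (-2 * π * T)) := by
    rw [qq, Complex.ofReal_exp, ← Complex.exp_int_mul]; push_cast; rfl
  rw [h1, neg_mul, ← neg_one_mul, ← Complex.exp_pi_mul_I, a, a, jacobiTheta₂_term,
    jacobiTheta₂_term, ← Complex.exp_add, ← Complex.exp_add]
  congr 1
  push_cast
  linear_combination (-(π:ℂ) * T + (2 * m + 1) * π * T) * Complex.I_sq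

end SU2

namespace SU2

noncomputable def Th (T : ℝ) (s : ℂ) : ℂ := jacobiTheta₂ (s + 1/2 - (T * Complex.I) / 2) (T * Complex.I)

lemma im_T (T : ℝ) : (T * Complex.I).im = T := by simp

lemma hasSum_Th {T : ℝ} (hT : 0 < T) (s : ℂ) :
    HasSum (fun m => a T m * (Complex.exp (2 * π * Complex.I * s)) ^ m) (Th T s) := by
  simp_rw [a_mul]
  exact hasSum_jacobiTheta₂_term _ (by rwa [im_T])

lemma summable_a {T : ℝ} (hT : 0 < T) : Summable (a T) :=
  (summable_jacobiTheta₂_term_iff _ _).2 (by rwa [im_T])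

lemma summable_ma {T : ℝ} (hT : 0 < T) : Summable (fun m : ℤ => (m : ℂ) * a T m) := by
  have h := (summable_jacobiTheta₂'_term_iff (1/2 - (T * Complex.I) / 2) (T * Complex.I)).2 (by rwa [im_T])
  refine (h.mul_left (2 * π * Complex.I)⁻¹).congr fun m => ?_
  rw [jacobiTheta₂'_term, ← a]
  have : (2 * π * Complex.I : ℂ) ≠ 0 := by simp [pi_ne_zero]
  field_simp

lemma a_refl (T : ℝ) (m : ℤ) : a T (1 - m) = -a T m := by
  rw [← neg_one_mul, ← Complex.exp_pi_mul_I, a, a, jacobiTheta₂_term, jacobiTheta₂_term,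
    ← Complex.exp_add]
  refine Complex.exp_eq_exp_iff_exists_int.2 ⟨-m, ?_⟩
  push_cast
  linear_combination (-(1 - m) * (π:ℂ) * T + m * π * T + (1 - 2 * m) * π * T) * Complex.I_sq

lemma tsum_a (T : ℝ) : ∑' m, a T m = 0 := by
  have h := (Equiv.subLeft (1:ℤ)).tsum_eq (a T)
  simp only [Equiv.subLeft_apply, a_refl, tsum_neg] at h
  have : (2:ℂ) * ∑' m, a T m = 0 := by linear_combination -h
  simpa using this

noncomputable def c (T : ℝ) (n : ℤ) : ℂ := ∑' l, a T l * a T (n - l)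

lemma c_rec (T : ℝ) (n : ℤ) : c T (n + 2) = (qq T : ℂ) ^ n * c T n := by
  have q0 : (qq T : ℂ) ≠ 0 := by exact_mod_cast (qq_pos T).ne'
  rw [c, c, ← (Equiv.addRight (1:ℤ)).tsum_eq, ← tsum_mul_left]
  congr 1 with l
  have : n + 2 - (l + 1) = (n - l) + 1 := by ring
  rw [Equiv.coe_addRight, this, a_succ, a_succ]
  have : (qq T : ℂ) ^ n = (qq T : ℂ) ^ l * (qq T : ℂ) ^ (n - l) := by
    rw [← zpow_add₀ q0]; congr 1; ring
  rw [this]; ring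

lemma summable_c {T : ℝ} (hT : 0 < T) : Summable (c T) := (conv (summable_a hT) (summable_a hT)).2.1

lemma tsum_c {T : ℝ} (hT : 0 < T) : ∑' n, c T n = 0 := by
  have := (conv (summable_a hT) (summable_a hT)).2.2
  rw [tsum_a, zero_mul] at this
  exact this.symm

lemma mc_eq {T : ℝ} (hT : 0 < T) (n : ℤ) : (n : ℂ) * c T n =
    (∑' l : ℤ, (l : ℂ) * a T l * a T (n - l)) + ∑' l : ℤ, a T l * (((n - l : ℤ) : ℂ) * a T (n - l)) := by
  have h1 := (conv (summable_ma hT) (summable_a hT)).1 n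
  have h2 := (conv (summable_a hT) (summable_ma hT)).1 n
  rw [← h1.tsum_add h2, c, ← tsum_mul_left]
  congr 1 with l
  push_cast; ring

lemma summable_mc {T : ℝ} (hT : 0 < T) : Summable (fun n : ℤ => (n : ℂ) * c T n) := by
  have h1 := (conv (summable_ma hT) (summable_a hT)).2.1
  have h2 := (conv (summable_a hT) (summable_ma hT)).2.1
  exact (h1.add h2).congr fun n => (mc_eq hT n).symm

lemma tsum_mc {T : ℝ} (hT : 0 < T) : ∑' n : ℤ, (n : ℂ) * c T n = 0 := by
  have h1 := (conv (summable_ma hT) (summable_a hT))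
  have h2 := (conv (summable_a hT) (summable_ma hT))
  simp_rw [mc_eq hT]
  rw [h1.2.1.tsum_add h2.2.1, ← h1.2.2, ← h2.2.2, tsum_a]
  simp

lemma Th_sq {T : ℝ} (hT : 0 < T) (s : ℂ) :
    HasSum (fun n => c T n * (Complex.exp (2 * π * Complex.I * s)) ^ n) (Th T s ^ 2) := by
  have h := hasSum_Th hT s
  have h1 := conv h.summable h.summable
  have e : ∀ n : ℤ, ∑' m, a T m * (Complex.exp (2 * π * Complex.I * s)) ^ m *
      (a T (n - m) * (Complex.exp (2 * π * Complex.I * s)) ^ (n - m)) =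
      c T n * (Complex.exp (2 * π * Complex.I * s)) ^ n := fun n => by
    rw [c, ← tsum_mul_right]
    congr 1 with m
    have : (Complex.exp (2 * π * Complex.I * s)) ^ n = (Complex.exp (2 * π * Complex.I * s)) ^ m *
      (Complex.exp (2 * π * Complex.I * s)) ^ (n - m) := by
      rw [← zpow_add₀ (Complex.exp_ne_zero _)]; congr 1; ring
    rw [this]; ring
  simp_rw [e] at h1
  rw [sq, ← h.tsum_eq, h1.2.2]
  exact h1.2.1.hasSum

noncomputable def G (T : ℝ) (n : ℤ) : ℂ := ∑' m, c T m * (F (qq T) (n - m) : ℂ)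

noncomputable def Fs (q : ℝ) (v : ℂ) : ℂ := ∑' n : ℤ, (F q n : ℂ) * v ^ n

lemma Fs_mul {T : ℝ} (hT : 0 < T) {s : ℂ} (h1 : qq T < ‖Complex.exp (2 * π * Complex.I * s)‖)
    (h2 : ‖Complex.exp (2 * π * Complex.I * s)‖ < 1) :
    (∀ n, Summable fun m => c T m * (F (qq T) (n - m) : ℂ)) ∧
    Th T s ^ 2 * Fs (qq T) (Complex.exp (2 * π * Complex.I * s)) =
      ∑' n : ℤ, G T n * (Complex.exp (2 * π * Complex.I * s)) ^ n := by
  have h := Th_sq hT s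
  set v := Complex.exp (2 * π * Complex.I * s) with hv
  have v0 : v ≠ 0 := Complex.exp_ne_zero _
  have hF := summable_F (qq_pos T) (qq_lt hT) h1 h2
  have h3 := conv h.summable hF
  have e : ∀ n m : ℤ, c T m * v ^ m * ((F (qq T) (n - m) : ℂ) * v ^ (n - m)) =
      c T m * (F (qq T) (n - m) : ℂ) * v ^ n := fun n m => by
    have : v ^ n = v ^ m * v ^ (n - m) := by
      rw [← zpow_add₀ v0]; congr 1; ring
    rw [this]; ring
  simp_rw [e] at h3
  refine ⟨fun n => ?_, ?_⟩
  · refine ((h3.1 n).mul_right (v ^ n)⁻¹).congr fun m => ?_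
    rw [mul_assoc, mul_inv_cancel₀ (zpow_ne_zero _ v0), mul_one]
  · rw [Fs, ← h.tsum_eq, h3.2.2]
    congr 1 with n
    rw [tsum_mul_right, G]

lemma exists_s {T : ℝ} (hT : 0 < T) : ∃ s : ℂ, qq T < ‖Complex.exp (2 * π * Complex.I * s)‖ ∧
    ‖Complex.exp (2 * π * Complex.I * s)‖ < 1 := by
  refine ⟨(T / 2 : ℝ) * Complex.I, ?_⟩
  have : (2 * π * Complex.I * ((T / 2 : ℝ) * Complex.I) : ℂ) = ((-π * T : ℝ) : ℂ) := by
    push_cast; linear_combination (π * T : ℂ) * Complex.I_sq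
  have h := mul_pos pi_pos hT
  rw [this, ← Complex.ofReal_exp, Complex.norm_real, Real.norm_of_nonneg (Real.exp_pos _).le, qq]
  constructor
  · rw [Real.exp_lt_exp]; linarith
  · rw [Real.exp_lt_one_iff]; linarith

lemma summable_G {T : ℝ} (hT : 0 < T) (n : ℤ) : Summable fun m => c T m * (F (qq T) (n - m) : ℂ) := by
  obtain ⟨s, h1, h2⟩ := exists_s hT
  exact (Fs_mul hT h1 h2).1 n

lemma G_eq {T : ℝ} (hT : 0 < T) (n : ℤ) : G T n = (qq T : ℂ) ^ n * G T n := by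
  have q0 : (qq T : ℂ) ≠ 0 := by exact_mod_cast (qq_pos T).ne'
  have hc := (Equiv.addRight (2:ℤ)).summable_iff.2 (summable_c hT)
  have hmc := (Equiv.addRight (2:ℤ)).summable_iff.2 (summable_mc hT)
  have tc := (Equiv.addRight (2:ℤ)).tsum_eq (c T)
  have tmc := (Equiv.addRight (2:ℤ)).tsum_eq (fun m : ℤ => (m : ℂ) * c T m)
  rw [tsum_c hT] at tc
  rw [tsum_mc hT] at tmc
  have key : ∀ m : ℤ, c T (m + 2) * (F (qq T) (n - (m + 2)) : ℂ) =
      (qq T : ℂ) ^ n * (c T m * (F (qq T) (n - m) : ℂ)) +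
        (((n : ℂ) + 1) * c T (m + 2) - ((m + 2 : ℤ) : ℂ) * c T (m + 2)) := fun m => by
    have h := F_rec (qq_pos T) (qq_lt hT) (n - (m + 2))
    have e : n - (m + 2) + 2 = n - m := by ring
    rw [e] at h
    rw [h]
    have : (qq T : ℂ) ^ n = (qq T : ℂ) ^ m * (qq T : ℂ) ^ (n - m) := by
      rw [← zpow_add₀ q0]; congr 1; ring
    rw [this, c_rec]
    push_cast; ring
  conv_lhs => rw [G, ← (Equiv.addRight (2:ℤ)).tsum_eq]
  simp only [Equiv.coe_addRight, Function.comp_def] at *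
  simp_rw [key]
  rw [((summable_G hT n).mul_left _).tsum_add ((hc.mul_left _).sub hmc), tsum_mul_left,
    (hc.mul_left _).tsum_sub hmc, tsum_mul_left, tc, tmc, G]
  simp

lemma G_zero {T : ℝ} (hT : 0 < T) {n : ℤ} (hn : n ≠ 0) : G T n = 0 := by
  have h := G_eq hT n
  by_contra h0
  have : (qq T : ℂ) ^ n = 1 := by
    apply mul_right_cancel₀ h0
    rw [← h, one_mul]
  have h1 : (qq T) ^ n = 1 := by exact_mod_cast this
  rw [zpow_eq_one_iff_right₀ (qq_pos T).le (qq_lt hT).ne] at h1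
  exact hn h1

lemma main_prod {T : ℝ} (hT : 0 < T) {s : ℂ} (h1 : qq T < ‖Complex.exp (2 * π * Complex.I * s)‖)
    (h2 : ‖Complex.exp (2 * π * Complex.I * s)‖ < 1) :
    Th T s ^ 2 * Fs (qq T) (Complex.exp (2 * π * Complex.I * s)) = G T 0 := by
  rw [(Fs_mul hT h1 h2).2, tsum_eq_single 0 fun n hn => by rw [G_zero hT hn, zero_mul]]
  simp

end SU2

namespace SU2

lemma hasSum_lin {v : ℂ} (hv : ‖v‖ < 1) : HasSum (fun n : ℕ => ((n : ℂ) + 1) * v ^ n) (1 / (1 - v) ^ 2) := by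
  have h1 := hasSum_coe_mul_geometric_of_norm_lt_one hv
  have h2 := hasSum_geometric_of_norm_lt_one hv
  have h0 : 1 - v ≠ 0 := by
    intro h
    have : v = 1 := by linear_combination -h
    rw [this] at hv; simp at hv
  have e : 1 / (1 - v) ^ 2 = v / (1 - v) ^ 2 + (1 - v)⁻¹ := by field_simp; ring
  rw [e]
  have e2 : (fun n : ℕ => ((n : ℂ) + 1) * v ^ n) = fun n : ℕ => (n : ℂ) * v ^ n + v ^ n := by
    ext n; ring
  rw [e2]
  exact h1.add h2

lemma F_nat_term (q : ℝ) (v : ℂ)  : ∀ n : ℕ, (F q (n : ℤ) : ℂ) * v ^ (n : ℤ) = (A q n : ℂ) * v ^ n := fun n => by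
    rw [F_nat, zpow_natCast]

lemma F_neg_term (q : ℝ) (v : ℂ) : ∀ n : ℕ, (F q (-((n : ℤ) + 1)) : ℂ) * v ^ (-((n : ℤ) + 1)) =
      (q : ℂ) ^ (n + 1) * (A q (n + 1) : ℂ) * (v ^ (n + 1))⁻¹ := fun n => by
    have : (-((n : ℤ) + 1)) = -((n + 1 : ℕ) : ℤ) := by push_cast; ring
    rw [this, F_neg, zpow_neg, zpow_natCast, Complex.ofReal_mul, Complex.ofReal_pow]

lemma F_sum_nat (q : ℝ) (v : ℂ) (h : Summable fun n : ℤ => (F q n : ℂ) * v ^ n) : Summable fun n : ℕ => (F q (n : ℤ) : ℂ) * v ^ (n : ℤ) :=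
    h.comp_injective (i := fun n : ℕ => (n : ℤ)) Nat.cast_injective

lemma F_sum_neg (q : ℝ) (v : ℂ) (h : Summable fun n : ℤ => (F q n : ℂ) * v ^ n) :  Summable fun n : ℕ => (F q (-((n : ℤ) + 1)) : ℂ) * v ^ (-((n : ℤ) + 1)) :=
    h.comp_injective (i := fun n : ℕ => -((n : ℤ) + 1)) (fun x y hxy => by simpa using hxy)

lemma Fs_split_aux (q : ℝ) (v : ℂ) (s1 : Summable fun n : ℕ => (F q (n : ℤ) : ℂ) * v ^ (n : ℤ)) (s2 : Summable fun n : ℕ => (F q (-((n : ℤ) + 1)) : ℂ) * v ^ (-((n : ℤ) + 1))) : Fs q v = (∑' n : ℕ, (A q n : ℂ) * v ^ n) +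
      ∑' n : ℕ, (q : ℂ) ^ (n + 1) * (A q (n + 1) : ℂ) * (v ^ (n + 1))⁻¹ := by
  have h3 := (HasSum.of_nat_of_neg_add_one (f := fun n : ℤ => (F q n : ℂ) * v ^ n) s1.hasSum s2.hasSum).tsum_eq
  rw [Fs, h3, tsum_congr (F_nat_term q v), tsum_congr (F_neg_term q v)]

lemma Fs_split {q : ℝ} (h0 : 0 < q) (h1 : q < 1) {v : ℂ} (hv : q < ‖v‖) (hv1 : ‖v‖ < 1) :
    Fs q v = (∑' n : ℕ, (A q n : ℂ) * v ^ n) +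
      ∑' n : ℕ, (q : ℂ) ^ (n + 1) * (A q (n + 1) : ℂ) * (v ^ (n + 1))⁻¹ := by
  have h := summable_F h0 h1 hv hv1
  exact Fs_split_aux q v (F_sum_nat q v h) (F_sum_neg q v h)

lemma Fs_bound {q : ℝ} (h0 : 0 < q) (h1 : q < 1) : ∃ M : ℝ, ∀ v : ℂ, √q ≤ ‖v‖ → ‖v‖ < 1 →
    ‖Fs q v - 1 / (1 - v) ^ 2‖ ≤ M := by
  obtain ⟨K, hK, hA⟩ := A_le h0 h1
  have hs0 : 0 < √q := Real.sqrt_pos.2 h0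
  have hs1 : √q < 1 := by rw [Real.sqrt_lt' one_pos]; simpa
  have hqs : q < √q := by
    have := Real.sq_sqrt h0.le; nlinarith
  have S1 := ((summable_nat_add_iff 2).2 ((summable_lin h0.le h1).mul_left K))
  have S2 := ((summable_nat_add_iff 1).2 ((summable_lin hs0.le hs1).mul_left K))
  refine ⟨(∑' n : ℕ, K * ((2 * ((n + 2 : ℕ) : ℝ) + 1) * q ^ (n + 2))) +
    ∑' n : ℕ, K * ((2 * ((n + 1 : ℕ) : ℝ) + 1) * √q ^ (n + 1)), fun v hv hv1 => ?_⟩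
  have v0 : 0 < ‖v‖ := hs0.trans_le hv
  have b1 : ∀ n : ℕ, ‖(q : ℂ) ^ (n + 2) * (A q (n + 2) : ℂ) * v ^ n‖ ≤
      K * ((2 * ((n + 2 : ℕ) : ℝ) + 1) * q ^ (n + 2)) := fun n => by
    rw [norm_mul, norm_mul, norm_pow, norm_pow, Complex.norm_real, Complex.norm_real,
      Real.norm_of_nonneg (A_nonneg h0 _), Real.norm_of_nonneg h0.le]
    calc q ^ (n + 2) * A q (n + 2) * ‖v‖ ^ n ≤ q ^ (n + 2) * (K * (2 * ((n + 2 : ℕ) : ℝ) + 1)) * 1 := by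
          gcongr
          · exact hA _
          · exact pow_le_one₀ v0.le hv1.le
      _ = _ := by ring
  have b2 : ∀ n : ℕ, ‖(q : ℂ) ^ (n + 1) * (A q (n + 1) : ℂ) * (v ^ (n + 1))⁻¹‖ ≤
      K * ((2 * ((n + 1 : ℕ) : ℝ) + 1) * √q ^ (n + 1)) := fun n => by
    rw [norm_mul, norm_mul, norm_inv, norm_pow, norm_pow, Complex.norm_real, Complex.norm_real,
      Real.norm_of_nonneg (A_nonneg h0 _), Real.norm_of_nonneg h0.le]
    calc q ^ (n + 1) * A q (n + 1) * (‖v‖ ^ (n + 1))⁻¹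
        ≤ q ^ (n + 1) * (K * (2 * ((n + 1 : ℕ) : ℝ) + 1)) * (√q ^ (n + 1))⁻¹ := by
          gcongr
          exact hA _
      _ = _ := by
          have : q ^ (n + 1) = √q ^ (n + 1) * √q ^ (n + 1) := by
            rw [← mul_pow, Real.mul_self_sqrt h0.le]
          rw [this]
          field_simp
  have e : (∑' n : ℕ, (A q n : ℂ) * v ^ n) = 1 / (1 - v) ^ 2 +
      ∑' n : ℕ, (q : ℂ) ^ (n + 2) * (A q (n + 2) : ℂ) * v ^ n := by
    rw [← (hasSum_lin hv1).tsum_eq, ← (hasSum_lin hv1).summable.tsum_add (S1.of_norm_bounded b1)]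
    congr 1 with n
    rw [A_rec h0 h1 n]; push_cast; ring
  rw [Fs_split h0 h1 (hqs.trans_le hv) hv1, e, add_assoc, add_sub_cancel_left]
  refine (norm_add_le _ _).trans (add_le_add ?_ ?_)
  · exact tsum_of_norm_bounded S1.hasSum b1
  · exact tsum_of_norm_bounded S2.hasSum b2

open Filter Topology

lemma tendsto_Fs {q : ℝ} (h0 : 0 < q) (h1 : q < 1) :
    Tendsto (fun x : ℝ => (x : ℂ) ^ 2 * Fs q (Complex.exp (-x))) (𝓝[>] 0) (𝓝 1) := by
  obtain ⟨M, hM⟩ := Fs_bound h0 h1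
  have hs1 : √q < 1 := by rw [Real.sqrt_lt' one_pos]; simpa
  have t1 : Tendsto (fun x : ℝ => x ^ 2 * M) (𝓝[>] 0) (𝓝 0) := by
    have : Continuous fun x : ℝ => x ^ 2 * M := by fun_prop
    have := this.tendsto 0
    simp only [ne_eq, OfNat.ofNat_ne_zero, not_false_eq_true, zero_pow, zero_mul] at this
    exact this.mono_left nhdsWithin_le_nhds
  have t2 : Tendsto (fun x : ℝ => (x / (1 - Real.exp (-x))) ^ 2) (𝓝[>] 0) (𝓝 1) := by
    have hd : HasDerivAt (fun x : ℝ => 1 - Real.exp (-x)) 1 0 := by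
      have := ((hasDerivAt_neg (0:ℝ)).exp).const_sub 1
      simpa using this
    have := hd.tendsto_slope_zero_right
    simp only [zero_add, neg_zero, Real.exp_zero, sub_self, sub_zero, smul_eq_mul] at this
    have := (this.inv₀ one_ne_zero).pow 2
    simp only [inv_one, one_pow] at this
    refine this.congr fun x => ?_
    rw [mul_inv, inv_inv, div_eq_mul_inv]
  have t3 : Tendsto (fun x : ℝ => (((x / (1 - Real.exp (-x))) ^ 2 : ℝ) : ℂ)) (𝓝[>] 0) (𝓝 ((1:ℝ) : ℂ)) :=
    (Complex.continuous_ofReal.tendsto _).comp t2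
  have t4 : Tendsto (fun x : ℝ => (x : ℂ) ^ 2 * (Fs q (Complex.exp (-x)) - 1 / (1 - Complex.exp (-x)) ^ 2))
      (𝓝[>] 0) (𝓝 0) := by
    refine squeeze_zero_norm' ?_ t1
    have e1 : ∀ᶠ x : ℝ in 𝓝[>] 0, √q < Real.exp (-x) := by
      have : Continuous fun x : ℝ => Real.exp (-x) := by fun_prop
      have := this.tendsto 0
      rw [neg_zero, Real.exp_zero] at this
      exact (this.eventually (lt_mem_nhds hs1)).filter_mono nhdsWithin_le_nhds
    filter_upwards [e1, self_mem_nhdsWithin] with x hx hx0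
    have hx0 : 0 < x := hx0
    have hn : ‖Complex.exp (-x)‖ = Real.exp (-x) := by
      rw [Complex.norm_exp]; simp
    rw [norm_mul, norm_pow, Complex.norm_real, Real.norm_of_nonneg hx0.le]
    gcongr
    apply hM
    · rw [hn]; exact hx.le
    · rw [hn, Real.exp_lt_one_iff]; linarith
  have := t4.add t3
  simp only [zero_add, Complex.ofReal_one] at this
  refine this.congr fun x => ?_
  push_cast
  rw [div_pow]; ring

lemma Th_zero {T : ℝ} (hT : 0 < T) : Th T 0 = 0 := by
  have := (hasSum_Th hT 0).tsum_eq
  simp only [mul_zero, Complex.exp_zero, one_zpow, mul_one, tsum_a] at this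
  exact this.symm

noncomputable def D (T : ℝ) : ℂ := jacobiTheta₂' (1/2 - (T * Complex.I) / 2) (T * Complex.I)

lemma tendsto_Th {T : ℝ} (hT : 0 < T) :
    Tendsto (fun x : ℝ => Th T (x * (Complex.I / (2 * π))) / x) (𝓝[>] 0) (𝓝 (D T * (Complex.I / (2 * π)))) := by
  have h := hasDerivAt_jacobiTheta₂_fst (1/2 - (T * Complex.I) / 2) (τ := T * Complex.I) (by rwa [im_T])
  have h2 : HasDerivAt (fun x : ℝ => (x : ℂ) * (Complex.I / (2 * π)) + 1 / 2 - (T * Complex.I) / 2)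
      (Complex.I / (2 * π)) 0 := by
    have := (((hasDerivAt_id (0:ℝ)).ofReal_comp.mul_const (Complex.I / (2 * π))).add_const (1/2)).sub_const ((T * Complex.I) / 2)
    simpa using this
  have h3 : HasDerivAt (fun x : ℝ => Th T (x * (Complex.I / (2 * π)))) (D T * (Complex.I / (2 * π))) 0 := by
    refine HasDerivAt.comp (𝕜' := ℂ) (h₂ := fun s => jacobiTheta₂ s (T * Complex.I)) 0 ?_ h2
    rw [← D] at h
    simpa using h
  have := h3.tendsto_slope_zero_right
  simp only [zero_add, Complex.ofReal_zero, zero_mul, Th_zero hT, sub_zero] at this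
  refine this.congr fun x => ?_
  rw [Complex.real_smul, Complex.ofReal_inv]; ring

lemma G_val {T : ℝ} (hT : 0 < T) : G T 0 = (D T * (Complex.I / (2 * π))) ^ 2 := by
  have h := ((tendsto_Th hT).pow 2).mul (tendsto_Fs (qq_pos T) (qq_lt hT))
  rw [mul_one] at h
  refine tendsto_nhds_unique ?_ h
  refine tendsto_const_nhds.congr' ?_
  have e1 : ∀ᶠ x : ℝ in 𝓝[>] 0, qq T < Real.exp (-x) := by
    have : Continuous fun x : ℝ => Real.exp (-x) := by fun_prop
    have := this.tendsto 0
    rw [neg_zero, Real.exp_zero] at this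
    exact (this.eventually (lt_mem_nhds (qq_lt hT))).filter_mono nhdsWithin_le_nhds
  filter_upwards [e1, self_mem_nhdsWithin] with x hx hx0
  have hx0 : 0 < x := hx0
  have e : 2 * π * Complex.I * (x * (Complex.I / (2 * π))) = (-x : ℂ) := by
    have : (π : ℂ) ≠ 0 := by simp [pi_ne_zero]
    field_simp
    rw [Complex.I_sq]; ring
  have hn : ‖Complex.exp (-x)‖ = Real.exp (-x) := by
    rw [Complex.norm_exp]; simp
  have := main_prod hT (s := x * (Complex.I / (2 * π))) (by rwa [e, hn])
    (by rw [e, hn, Real.exp_lt_one_iff]; linarith)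
  rw [e] at this
  rw [← this]
  have : (x : ℂ) ≠ 0 := by exact_mod_cast hx0.ne'
  field_simp

end SU2

namespace SU2
open Filter Topology

lemma G_ne {T : ℝ} (hT : 0 < T) : G T 0 ≠ 0 := by
  intro hG
  have hTim : 0 < ((T : ℂ) * Complex.I).im := by rwa [im_T]
  -- Th vanishes on a small interval
  have h1 : ∀ᶠ x : ℝ in 𝓝[>] 0, Th T (x * (Complex.I / (2 * π))) = 0 := by
    have e1 : ∀ᶠ x : ℝ in 𝓝[>] 0, qq T < Real.exp (-x) := by
      have : Continuous fun x : ℝ => Real.exp (-x) := by fun_prop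
      have := this.tendsto 0
      rw [neg_zero, Real.exp_zero] at this
      exact (this.eventually (lt_mem_nhds (qq_lt hT))).filter_mono nhdsWithin_le_nhds
    have e2 := (tendsto_Fs (qq_pos T) (qq_lt hT)).eventually_ne one_ne_zero
    filter_upwards [e1, e2, self_mem_nhdsWithin] with x hx hne hx0
    have hx0 : 0 < x := hx0
    have e : 2 * π * Complex.I * (x * (Complex.I / (2 * π))) = (-x : ℂ) := by
      have : (π : ℂ) ≠ 0 := by simp [pi_ne_zero]
      field_simp
      rw [Complex.I_sq]; ring
    have hn : ‖Complex.exp (-x)‖ = Real.exp (-x) := by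
      rw [Complex.norm_exp]; simp
    have := main_prod hT (s := x * (Complex.I / (2 * π))) (by rwa [e, hn])
      (by rw [e, hn, Real.exp_lt_one_iff]; linarith)
    rw [e, hG] at this
    have hF : Fs (qq T) (Complex.exp (-x)) ≠ 0 := fun h => hne (by rw [h, mul_zero])
    simpa [hF] using this
  have hd : Differentiable ℂ (fun x : ℂ => Th T (x * (Complex.I / (2 * π)))) := fun x => by
    have h := differentiableAt_jacobiTheta₂_fst (x * (Complex.I / (2 * π)) + 1 / 2 - (T * Complex.I) / 2) hTim
    exact DifferentiableAt.comp (g := fun s => jacobiTheta₂ s (T * Complex.I)) x h (by fun_prop)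
  have ha : AnalyticOnNhd ℂ (fun x : ℂ => Th T (x * (Complex.I / (2 * π)))) Set.univ :=
    fun x _ => hd.analyticAt x
  have hfreq : ∃ᶠ x : ℂ in 𝓝[≠] 0, Th T (x * (Complex.I / (2 * π))) = (fun _ => 0 : ℂ → ℂ) x := by
    have ht : Tendsto (fun x : ℝ => (x : ℂ)) (𝓝[>] 0) (𝓝[≠] 0) := by
      refine tendsto_nhdsWithin_iff.2 ⟨?_, ?_⟩
      · have := (Complex.continuous_ofReal.tendsto 0)
        rw [Complex.ofReal_zero] at this
        exact this.mono_left nhdsWithin_le_nhds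
      · filter_upwards [self_mem_nhdsWithin] with x hx
        have hx : 0 < x := hx
        simpa using hx.ne'
    exact ht.frequently h1.frequently
  have hz := ha.eq_of_frequently_eq (fun x _ => analyticAt_const) hfreq
  have h2 : Th T (1 / 2 + (T * Complex.I) / 2) = 0 := by
    have := congrFun hz ((1 / 2 + (T * Complex.I) / 2) / (Complex.I / (2 * π)))
    rwa [div_mul_cancel₀] at this
    simp [pi_ne_zero]
  have e : (1 / 2 + (T * Complex.I) / 2 : ℂ) + 1 / 2 - (T * Complex.I) / 2 = 0 + 1 := by ring
  rw [Th, e, jacobiTheta₂_add_left] at h2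
  have hs := hasSum_jacobiTheta₂_term 0 hTim
  rw [h2] at hs
  have ee : ∀ n : ℤ, jacobiTheta₂_term n 0 (T * Complex.I) = ((Real.exp (-π * n ^ 2 * T) : ℝ) : ℂ) := fun n => by
    rw [jacobiTheta₂_term, Complex.ofReal_exp]
    congr 1
    push_cast
    linear_combination ((π : ℂ) * n ^ 2 * T) * Complex.I_sq
  simp_rw [ee] at hs
  have hs' : HasSum (fun n : ℤ => Real.exp (-π * n ^ 2 * T)) 0 := by
    have := Complex.hasSum_re hs
    simpa only [Complex.ofReal_re, Complex.zero_re] using this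
  rw [hasSum_zero_iff_of_nonneg (fun n => (Real.exp_pos _).le)] at hs'
  exact (Real.exp_pos _).ne' (congrFun hs' 0)

lemma half_sq (x : ℂ) : (x ^ (1 / 2 : ℂ)) ^ 2 = x := by
  rw [← Complex.cpow_nat_mul]; norm_num

lemma theta_mod {T : ℝ} (hT : 0 < T) (y : ℂ) :
    jacobiTheta₂ y (T * Complex.I) ^ 2 =
      1 / T * Complex.exp (-2 * π * y ^ 2 / T) * jacobiTheta₂ (y / T * Complex.I) ((1 / T : ℝ) * Complex.I) ^ 2 := by
  have T0 : (T : ℂ) ≠ 0 := by exact_mod_cast hT.ne'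
  have I0 := Complex.I_ne_zero
  rw [jacobiTheta₂_functional_equation]
  have e1 : -Complex.I * (T * Complex.I) = T := by linear_combination (-(T : ℂ)) * Complex.I_sq
  have e2 : y / (T * Complex.I) = -(y / T * Complex.I) := by
    field_simp; linear_combination y * Complex.I_sq
  have e3 : -1 / (T * Complex.I) = ((1 / T : ℝ) * Complex.I) := by
    push_cast; field_simp; linear_combination -Complex.I_sq
  have e4 : -π * Complex.I * y ^ 2 / (T * Complex.I) = -π * y ^ 2 / T := by
    field_simp
  rw [e1, e2, e3, e4, jacobiTheta₂_neg_left, mul_pow, mul_pow, div_pow, half_sq, ← Complex.exp_nat_mul, one_pow]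
  congr 3
  push_cast; ring

lemma D_mod {T : ℝ} (hT : 0 < T) :
    D T ^ 2 = 1 / T ^ 3 * Complex.exp (π * T / 2 - π / (2 * T)) * D (1 / T) ^ 2 := by
  have T0 : (T : ℂ) ≠ 0 := by exact_mod_cast hT.ne'
  have I0 := Complex.I_ne_zero
  have e1 : -Complex.I * (T * Complex.I) = T := by linear_combination (-(T : ℂ)) * Complex.I_sq
  have e3 : -1 / (T * Complex.I) = ((1 / T : ℝ) * Complex.I) := by
    push_cast; field_simp; linear_combination -Complex.I_sq
  have e2 : (1 / 2 - T * Complex.I / 2) / (T * Complex.I) = -(1 / 2 + ((1 / T : ℝ) * Complex.I) / 2) := by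
    push_cast; field_simp; linear_combination Complex.I_sq
  have e5 : (1 / 2 - ((1 / T : ℝ) * Complex.I) / 2 : ℂ) = -(1 / 2 + ((1 / T : ℝ) * Complex.I) / 2) + 1 := by
    ring
  have hz : jacobiTheta₂ (-(1 / 2 + ((1 / T : ℝ) * Complex.I) / 2)) ((1 / T : ℝ) * Complex.I) = 0 := by
    have := Th_zero (T := 1 / T) (by positivity)
    rwa [Th, zero_add, e5, jacobiTheta₂_add_left] at this
  rw [D, D, jacobiTheta₂'_functional_equation, e5, jacobiTheta₂'_add_left, e1, e2, e3, hz, mul_zero, sub_zero,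
    mul_pow, div_pow, mul_pow, div_pow, half_sq, ← Complex.exp_nat_mul, one_pow]
  have e6 : ((2 : ℕ) : ℂ) * (-π * Complex.I * (1 / 2 - T * Complex.I / 2) ^ 2 / (T * Complex.I)) =
     π * T / 2 - π / (2 * T) + π * Complex.I := by
    push_cast; field_simp
    linear_combination (-(T : ℂ) ^ 2) * Complex.I_sq
  rw [e6, Complex.exp_add, Complex.exp_pi_mul_I, mul_pow, Complex.I_sq]
  field_simp

lemma Fs_mod {T : ℝ} (hT : 0 < T) {s s' y : ℂ} (hs : s + 1 / 2 - (T * Complex.I) / 2 = y)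
    (hs' : s' + 1 / 2 - ((1 / T : ℝ) * Complex.I) / 2 = y / T * Complex.I + 1)
    (h1 : qq T < ‖Complex.exp (2 * π * Complex.I * s)‖)
    (h2 : ‖Complex.exp (2 * π * Complex.I * s)‖ < 1)
    (h1' : qq (1 / T) < ‖Complex.exp (2 * π * Complex.I * s')‖)
    (h2' : ‖Complex.exp (2 * π * Complex.I * s')‖ < 1) :
    Fs (qq T) (Complex.exp (2 * π * Complex.I * s)) =
      1 / T ^ 2 * Complex.exp (π * T / 2 - π / (2 * T) + 2 * π * y ^ 2 / T) *
      Fs (qq (1 / T)) (Complex.exp (2 * π * Complex.I * s')) := by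
  have hT' : 0 < 1 / T := by positivity
  have T0 : (T : ℂ) ≠ 0 := by exact_mod_cast hT.ne'
  have m1 := main_prod hT h1 h2
  have m2 := main_prod hT' h1' h2'
  have hG := G_ne hT'
  have hTh : Th (1 / T) s' ≠ 0 := by
    intro h
    rw [h] at m2
    apply hG; rw [← m2]; ring
  have hm : Th T s ^ 2 = 1 / T * Complex.exp (-2 * π * y ^ 2 / T) * Th (1 / T) s' ^ 2 := by
    rw [Th, Th, hs, hs', jacobiTheta₂_add_left, theta_mod hT]
  have hD : G T 0 = 1 / T ^ 3 * Complex.exp (π * T / 2 - π / (2 * T)) * G (1 / T) 0 := by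
    rw [G_val hT, G_val hT', mul_pow, D_mod hT]; ring
  rw [← m1, ← m2, hm] at hD
  rw [Complex.exp_add]
  have hE : Complex.exp (2 * π * y ^ 2 / T) * Complex.exp (-2 * π * y ^ 2 / T) = 1 := by
    rw [← Complex.exp_add, ← Complex.exp_zero]; congr 1; ring
  have hE0 := Complex.exp_ne_zero (-2 * π * y ^ 2 / T)
  apply mul_left_cancel₀ (mul_ne_zero (mul_ne_zero (one_div_ne_zero T0) hE0) (pow_ne_zero 2 hTh))
  rw [hD]
  have : (1 : ℂ) / T ^ 3 = 1 / T * (1 / T ^ 2) := by field_simp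
  rw [this]
  linear_combination (-(1 / (T : ℂ) * (1 / T ^ 2) * Complex.exp (π * T / 2 - π / (2 * T)) * Th (1 / T) s' ^ 2 *
    Fs (qq (1 / T)) (Complex.exp (2 * π * Complex.I * s')))) * hE

end SU2

namespace SU2
open Filter Topology

lemma summable_dbl {q : ℝ} (h0 : 0 < q) (h1 : q < 1) {x : ℂ} (hx : ‖x‖ < 1) :
    Summable fun p : ℕ × ℕ => (((2 * (p.1 : ℝ) + p.2 + 1) * q ^ (p.1 * (p.1 + p.2 + 1)) : ℝ) : ℂ) * x ^ p.2 := by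
  have h := (summable_lin h0.le h1).mul_of_nonneg (summable_lin (norm_nonneg x) hx)
    (fun k => by positivity) (fun k => by positivity)
  refine Summable.of_norm_bounded h fun p => ?_
  rw [norm_mul, norm_pow, Complex.norm_real, Real.norm_of_nonneg (term_nonneg h0 p.1 p.2)]
  calc _ ≤ (p.2 + 1) * ((2 * (p.1 : ℝ) + 1) * q ^ p.1) * ‖x‖ ^ p.2 := by
        exact mul_le_mul_of_nonneg_right (term_le h0 h1 p.1 p.2) (by positivity)
    _ ≤ (2 * p.2 + 1) * ((2 * (p.1 : ℝ) + 1) * q ^ p.1) * ‖x‖ ^ p.2 := by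
        gcongr
        have : (0:ℝ) ≤ p.2 := by positivity
        linarith
    _ = _ := by ring

/-- k-term of the Appell-type series -/
noncomputable def R (q : ℝ) (v : ℂ) (k : ℤ) : ℂ :=
  (q : ℂ) ^ (k * (k + 1)) * ((2 * (k : ℂ) + 1) - 2 * k * (v * (q : ℂ) ^ k)) / (1 - v * (q : ℂ) ^ k) ^ 2

lemma ne_of_norm {x : ℂ} (hx : ‖x‖ < 1) : 1 - x ≠ 0 := by
  intro h
  have : x = 1 := by linear_combination -h
  rw [this] at hx; simp at hx

lemma R_nat {q : ℝ} (h0 : 0 < q) (h1 : q < 1) {v : ℂ} (hv1 : ‖v‖ < 1) (k : ℕ) :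
    R q v k = ∑' n : ℕ, (((2 * (k : ℝ) + n + 1) * q ^ (k * (k + n + 1)) : ℝ) : ℂ) * v ^ n := by
  have hx : ‖v * (q : ℂ) ^ k‖ < 1 := by
    rw [norm_mul, norm_pow, Complex.norm_real, Real.norm_of_nonneg h0.le]
    calc ‖v‖ * q ^ k ≤ ‖v‖ * 1 := by gcongr; exact pow_le_one₀ h0.le h1.le
      _ < 1 := by linarith
  have hs := (((hasSum_geometric_of_norm_lt_one hx).mul_left (2 * (k : ℂ))).add (hasSum_lin hx)).mul_left
    ((q : ℂ) ^ (k * (k + 1)))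
  have e : ∀ n : ℕ, (((2 * (k : ℝ) + n + 1) * q ^ (k * (k + n + 1)) : ℝ) : ℂ) * v ^ n =
      (q : ℂ) ^ (k * (k + 1)) * (2 * (k : ℂ) * (v * (q : ℂ) ^ k) ^ n + ((n : ℂ) + 1) * (v * (q : ℂ) ^ k) ^ n) := fun n => by
    have : k * (k + n + 1) = k * (k + 1) + k * n := by ring
    rw [this, pow_add, pow_mul q k n, mul_pow]
    push_cast; ring
  rw [tsum_congr e, hs.tsum_eq, R]
  have h2 := ne_of_norm hx
  have e3 : (q : ℂ) ^ ((k : ℤ) * (k + 1)) = (q : ℂ) ^ (k * (k + 1)) := by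
    rw [← zpow_natCast]; push_cast; rfl
  rw [e3, zpow_natCast, Int.cast_natCast]
  field_simp
  ring

lemma R_neg {q : ℝ} (h0 : 0 < q) (h1 : q < 1) {v : ℂ} (hv : q < ‖v‖) (k : ℕ) :
    R q v (-((k : ℤ) + 1)) = ∑' n : ℕ, (((2 * (k : ℝ) + (n + 1 : ℕ) + 1) * q ^ (k * (k + (n + 1 : ℕ) + 1)) : ℝ) : ℂ)
      * ((q : ℂ) / v) ^ (n + 1) := by
  have v0 : v ≠ 0 := by rw [← norm_pos_iff]; linarith
  have q0 : (q : ℂ) ≠ 0 := by exact_mod_cast h0.ne'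
  set y := (q : ℂ) / v * (q : ℂ) ^ k with hy
  have y0 : y ≠ 0 := by positivity
  have hx : ‖y‖ < 1 := by
    rw [norm_mul, norm_div, norm_pow, Complex.norm_real, Real.norm_of_nonneg h0.le]
    calc q / ‖v‖ * q ^ k ≤ q / ‖v‖ * 1 := by gcongr; exact pow_le_one₀ h0.le h1.le
      _ < 1 := by rw [mul_one]; exact (div_lt_one (by linarith)).2 hv
  have hs := (((hasSum_geometric_of_norm_lt_one hx).mul_left (2 * (k : ℂ) + 1)).add (hasSum_lin hx)).mul_left
    ((q : ℂ) ^ (k * (k + 1)) * y)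
  have e : ∀ n : ℕ, (((2 * (k : ℝ) + (n + 1 : ℕ) + 1) * q ^ (k * (k + (n + 1 : ℕ) + 1)) : ℝ) : ℂ)
      * ((q : ℂ) / v) ^ (n + 1) =
      (q : ℂ) ^ (k * (k + 1)) * y * ((2 * (k : ℂ) + 1) * y ^ n + ((n : ℂ) + 1) * y ^ n) := fun n => by
    have : k * (k + (n + 1) + 1) = k * (k + 1) + k * (n + 1) := by ring
    have h3 : (q : ℂ) ^ (k * (n + 1)) * ((q : ℂ) / v) ^ (n + 1) = y ^ (n + 1) := by
      rw [hy, mul_pow, pow_mul]; ring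
    rw [this, pow_add]
    push_cast
    linear_combination ((2 * (k : ℂ) + (n + 1) + 1) * (q : ℂ) ^ (k * (k + 1))) * h3
  rw [tsum_congr e, hs.tsum_eq, R]
  have h2 := ne_of_norm hx
  have e3 : (q : ℂ) ^ (-((k : ℤ) + 1) * (-((k : ℤ) + 1) + 1)) = (q : ℂ) ^ (k * (k + 1)) := by
    rw [← zpow_natCast]; congr 1; push_cast; ring
  have e4 : v * (q : ℂ) ^ (-((k : ℤ) + 1)) = y⁻¹ := by
    have : (-((k : ℤ) + 1)) = -((k + 1 : ℕ) : ℤ) := by push_cast; ring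
    rw [this, zpow_neg, zpow_natCast, hy, pow_succ]
    field_simp
  rw [e3, e4]
  have e5 : (1 - y⁻¹) ^ 2 = (1 - y) ^ 2 / y ^ 2 := by field_simp; ring
  rw [e5]
  push_cast
  field_simp
  ring

lemma R_sum {q : ℝ} (h0 : 0 < q) (h1 : q < 1) {v : ℂ} (hv : q < ‖v‖) (hv1 : ‖v‖ < 1) :
    ∑' k : ℤ, R q v k = Fs q v := by
  have v0 : v ≠ 0 := by rw [← norm_pos_iff]; linarith
  have d1 := summable_dbl h0 h1 hv1
  have hqv : ‖(q : ℂ) / v‖ < 1 := by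
    rw [norm_div, Complex.norm_real, Real.norm_of_nonneg h0.le]
    exact (div_lt_one (by linarith)).2 hv
  have d2' := summable_dbl h0 h1 hqv
  have d2 : Summable fun p : ℕ × ℕ => (((2 * (p.1 : ℝ) + (p.2 + 1 : ℕ) + 1) * q ^ (p.1 * (p.1 + (p.2 + 1 : ℕ) + 1)) : ℝ) : ℂ)
      * ((q : ℂ) / v) ^ (p.2 + 1) :=
    d2'.comp_injective (i := fun p : ℕ × ℕ => (p.1, p.2 + 1)) (fun p p' h => by
      simp only [Prod.mk.injEq, add_left_inj] at h
      exact Prod.ext h.1 h.2)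
  have s1 : Summable fun k : ℕ => R q v (k : ℤ) := d1.prod.congr fun k => (R_nat h0 h1 hv1 k).symm
  have s2 : Summable fun k : ℕ => R q v (-((k : ℤ) + 1)) := d2.prod.congr fun k => (R_neg h0 h1 hv k).symm
  have h3 := (s1.hasSum.of_nat_of_neg_add_one s2.hasSum).tsum_eq
  have t1 := tsum_congr (L := .unconditional ℕ) (R_nat h0 h1 hv1)
  have t2 := tsum_congr (L := .unconditional ℕ) (R_neg h0 h1 hv)
  have c1 := Summable.tsum_comm (f := fun k n : ℕ => (((2 * (k : ℝ) + n + 1) * q ^ (k * (k + n + 1)) : ℝ) : ℂ) * v ^ n) d1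
  have c2 := Summable.tsum_comm (f := fun k n : ℕ => (((2 * (k : ℝ) + (n + 1 : ℕ) + 1) * q ^ (k * (k + (n + 1 : ℕ) + 1)) : ℝ) : ℂ)
      * ((q : ℂ) / v) ^ (n + 1)) d2
  rw [h3, t1, t2, ← c1, ← c2, Fs_split h0 h1 hv hv1]
  congr 1
  · refine tsum_congr fun n => ?_
    rw [tsum_mul_right, ← Complex.ofReal_tsum, A]
  · refine tsum_congr fun n => ?_
    rw [tsum_mul_right, ← Complex.ofReal_tsum, ← A, div_pow]
    ring

end SU2

namespace SU2
open Filter Topology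

lemma qq_T {t : ℝ} : qq (2 * t / π) = Real.exp (-4 * t) := by
  rw [qq]; congr 1; have := pi_ne_zero; field_simp; ring

lemma qq_T' {t : ℝ} (ht : 0 < t) : qq (1 / (2 * t / π)) = Real.exp (-(π ^ 2 / t)) := by
  rw [qq]; congr 1; have := pi_ne_zero; field_simp

lemma heat_inner (t z : ℝ) (n : ℤ) : ∑' k : ℕ, heatTerm t 0 z n k =
    (F (qq (2 * t / π)) n : ℂ) * Complex.exp (-2 * t + z * Complex.I) ^ n := by
  have e : ∀ k : ℕ, heatTerm t 0 z n k =
      (((2 * (k : ℝ) + n.natAbs + 1) * qq (2 * t / π) ^ (k * (k + n.natAbs + 1)) : ℝ) : ℂ) *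
       (((Real.exp (-2 * n.natAbs * t) : ℝ) : ℂ) * Complex.exp ((n : ℂ) * (z : ℂ) * Complex.I)) := fun k => by
    rw [heatTerm, mul_zero, Real.cos_zero, jacobiP_one, one_pow, mul_one, mul_one, ← mul_assoc, ← Complex.ofReal_mul,
      qq_T, ← Real.exp_nat_mul, mul_assoc (2 * (k:ℝ) + n.natAbs + 1), ← Real.exp_add]
    congr 5
    push_cast; ring
  rw [tsum_congr e, tsum_mul_right, ← Complex.ofReal_tsum, ← A, F, ← Complex.exp_int_mul]
  rcases le_total 0 n with h | h
  · obtain ⟨m, rfl⟩ := Int.eq_ofNat_of_zero_le h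
    have : (-(m : ℤ)).toNat = 0 := by simp
    rw [this, pow_zero, one_mul, Complex.ofReal_exp, ← Complex.exp_add]
    congr 2
    simp; ring
  · obtain ⟨m, rfl⟩ : ∃ m : ℕ, n = -(m : ℤ) := ⟨n.natAbs, by omega⟩
    have : (-(-(m : ℤ))).toNat = m := by simp
    have hE : ((Real.exp (-2 * ((-(m : ℤ)).natAbs : ℝ) * t) : ℝ) : ℂ) *
        Complex.exp (((-(m : ℤ) : ℤ) : ℂ) * (z : ℂ) * Complex.I) =
        ((qq (2 * t / π) ^ m : ℝ) : ℂ) *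
          Complex.exp (((-(m : ℤ) : ℤ) : ℂ) * (-2 * t + z * Complex.I)) := by
      rw [qq_T, ← Real.exp_nat_mul, Complex.ofReal_exp, Complex.ofReal_exp, ← Complex.exp_add, ← Complex.exp_add]
      congr 1
      simp; ring
    rw [this, Complex.ofReal_mul, hE]
    ring

lemma norm_v (t z : ℝ) : ‖Complex.exp (-2 * t + z * Complex.I)‖ = Real.exp (-2 * t) := by
  rw [Complex.norm_exp]; simp

lemma heatP_eq (t z : ℝ) : heatP t 0 z = (Fs (qq (2 * t / π)) (Complex.exp (-2 * t + z * Complex.I))).re := by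
  rw [heatP, Fs]; simp_rw [heat_inner]

lemma heatP_cont {t : ℝ} (ht : 0 < t) : Continuous fun z => heatP t 0 z := by
  have hT : 0 < 2 * t / π := by positivity
  simp_rw [heatP_eq]
  refine Complex.continuous_re.comp ?_
  have h := (summable_F (qq_pos _) (qq_lt hT) (v := Complex.exp (-2 * t + (0:ℝ) * Complex.I))
    (by rw [norm_v, qq_T, Real.exp_lt_exp]; linarith) (by rw [norm_v, Real.exp_lt_one_iff]; linarith)).norm
  refine continuous_tsum (fun n => ?_) h fun n z => ?_
  · refine continuous_const.mul (Continuous.zpow₀ (by fun_prop) n fun z => Or.inl (Complex.exp_ne_zero _))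
  · rw [norm_mul, norm_mul, norm_zpow, norm_zpow, norm_v, norm_v]

/-- the k-term in the statement -/
noncomputable def S (t : ℝ) (z : ℝ) (k : ℤ) : ℝ :=
  Real.exp (-((k : ℝ) * ((k : ℝ) + 1) * Real.pi ^ 2) / t) *
          ((2 * (k : ℝ) + 1) + 2 * (k : ℝ) *
              Real.exp (-(Real.pi / (2 * t)) * (z + 2 * (k : ℝ) * Real.pi))) /
            (1 + Real.exp (-(Real.pi / (2 * t)) * (z + 2 * (k : ℝ) * Real.pi))) ^ 2

lemma S_bound (t z : ℝ) (k : ℤ) : ‖S t z k‖ ≤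
    (4 * |(k : ℝ)| + 1) * Real.exp (-((k : ℝ) * ((k : ℝ) + 1) * Real.pi ^ 2) / t) := by
  rw [S]
  set w := Real.exp (-(Real.pi / (2 * t)) * (z + 2 * (k : ℝ) * Real.pi)) with hw
  have w0 : 0 < w := Real.exp_pos _
  rw [norm_div, norm_mul, Real.norm_of_nonneg (Real.exp_pos _).le, Real.norm_of_nonneg (by positivity : 0 ≤ (1 + w) ^ 2),
    div_le_iff₀ (by positivity), Real.norm_eq_abs]
  have hk := abs_nonneg (k : ℝ)
  have h1 : |2 * (k : ℝ) + 1 + 2 * k * w| ≤ 2 * |(k : ℝ)| + 1 + 2 * |(k : ℝ)| * w := by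
    refine (abs_add_le _ _).trans (add_le_add ((abs_add_le _ _).trans ?_) ?_)
    · simp [abs_mul]
    · simp [abs_mul, abs_of_pos w0]
  have h2 := mul_nonneg hk w0.le
  have key : |2 * (k : ℝ) + 1 + 2 * k * w| ≤ (4 * |(k : ℝ)| + 1) * (1 + w) ^ 2 := by
    refine h1.trans ?_
    nlinarith [mul_nonneg hk (sq_nonneg w), sq_nonneg w]
  refine (mul_le_mul_of_nonneg_left key (Real.exp_pos _).le).trans (le_of_eq (by ring))

lemma S_summable {t : ℝ} (ht : 0 < t) : Summable fun k : ℤ =>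
    (4 * |(k : ℝ)| + 1) * Real.exp (-((k : ℝ) * ((k : ℝ) + 1) * Real.pi ^ 2) / t) := by
  have hT : 0 < π / t := by positivity
  have h1 := summable_pow_mul_jacobiTheta₂_term_bound (π / t / 2) hT 1
  have h0 := summable_pow_mul_jacobiTheta₂_term_bound (π / t / 2) hT 0
  refine Summable.of_nonneg_of_le (fun k => by positivity) (fun k => ?_) ((h1.mul_left 4).add h0)
  rw [pow_one, pow_zero, ← mul_assoc, ← add_mul]
  simp only [Int.cast_abs]
  refine mul_le_mul_of_nonneg_left (Real.exp_le_exp.2 ?_) (by positivity)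
  have h2 : -((k : ℝ) * (k + 1) * π ^ 2) / t = -π * (π / t * k ^ 2 + π / t * k) := by field_simp
  have h3 : -|(k : ℝ)| ≤ k := neg_abs_le _
  rw [h2]
  have h4 : 0 < π * (π / t) := by positivity
  have : -π * (π / t * k ^ 2 - 2 * (π / t / 2) * |(k : ℝ)|) - -π * (π / t * k ^ 2 + π / t * k) =
     (π * (π / t)) * (|(k:ℝ)| + k) := by ring
  have h5 : 0 ≤ (π * (π / t)) * (|(k:ℝ)| + k) := mul_nonneg h4.le (by linarith)
  linarith

lemma S_cont {t : ℝ} (ht : 0 < t) : Continuous fun z => ∑' k : ℤ, S t z k := by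
  refine continuous_tsum (fun k => ?_) (S_summable ht) fun k z => S_bound t z k
  unfold S
  refine Continuous.div (by fun_prop) (by fun_prop) fun z => ?_
  have := Real.exp_pos (-(Real.pi / (2 * t)) * (z + 2 * (k : ℝ) * Real.pi))
  positivity

lemma rexp_zpow (x : ℝ) (k : ℤ) : Real.exp x ^ k = Real.exp (k * x) := by
  rw [mul_comm, Real.exp_mul, Real.rpow_intCast]

lemma S_eq_R {t : ℝ} (ht : 0 < t) (z : ℝ) (k : ℤ) :
    (S t z k : ℂ) = R (qq (1 / (2 * t / π))) ((-Real.exp (-(π * z / (2 * t))) : ℝ) : ℂ) k := by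
  rw [R, qq_T' ht, ← Complex.ofReal_zpow, ← Complex.ofReal_zpow, rexp_zpow, rexp_zpow,
    ← Complex.ofReal_mul]
  have e : -Real.exp (-(π * z / (2 * t))) * Real.exp (k * -(π ^ 2 / t)) =
      -Real.exp (-(Real.pi / (2 * t)) * (z + 2 * (k : ℝ) * Real.pi)) := by
    rw [neg_mul, ← Real.exp_add]; congr 2; field_simp; ring
  have e2 : (((k * (k + 1) : ℤ)) : ℝ) * -(π ^ 2 / t) = -((k : ℝ) * ((k : ℝ) + 1) * Real.pi ^ 2) / t := by
    push_cast; field_simp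
  rw [e, e2, S]
  push_cast
  simp only [mul_neg, sub_neg_eq_add]

lemma main_open {t : ℝ} (ht : 0 < t) {z : ℝ} (hz : z ∈ Set.Ioo 0 π) :
    heatP t 0 z = (Real.pi ^ 2 * Real.exp t / (4 * t ^ 2)) *
        Real.exp (-(2 * Real.pi * z - z ^ 2) / (4 * t)) * ∑' k : ℤ, S t z k := by
  have hT : 0 < 2 * t / π := by positivity
  have hT' : 0 < 1 / (2 * t / π) := by positivity
  have p0 : (π : ℂ) ≠ 0 := by exact_mod_cast pi_ne_zero
  have t0 : (t : ℂ) ≠ 0 := by exact_mod_cast ht.ne'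
  set y : ℂ := (z - π) / (2 * π) with hy
  set s : ℂ := y - 1 / 2 + ((2 * t / π : ℝ) * Complex.I) / 2 with hs
  set s' : ℂ := y / (2 * t / π : ℝ) * Complex.I + 1 / 2 + ((1 / (2 * t / π) : ℝ) * Complex.I) / 2 with hs'
  have e1 : Complex.exp (2 * π * Complex.I * s) = Complex.exp (-2 * t + z * Complex.I) := by
    refine Complex.exp_eq_exp_iff_exists_int.2 ⟨-1, ?_⟩
    rw [hs, hy]; push_cast; field_simp
    linear_combination (2 * t : ℂ) * Complex.I_sq
  have e2 : Complex.exp (2 * π * Complex.I * s') = ((-Real.exp (-(π * z / (2 * t))) : ℝ) : ℂ) := by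
    rw [Complex.ofReal_neg, Complex.ofReal_exp, ← neg_one_mul, ← Complex.exp_pi_mul_I, ← Complex.exp_add]
    congr 1
    rw [hs', hy]; push_cast; field_simp
    linear_combination (z : ℂ) * Complex.I_sq
  have n2 : ‖((-Real.exp (-(π * z / (2 * t))) : ℝ) : ℂ)‖ = Real.exp (-(π * z / (2 * t))) := by
    rw [Complex.norm_real, norm_neg, Real.norm_of_nonneg (Real.exp_pos _).le]
  have a1 : qq (2 * t / π) < ‖Complex.exp (2 * π * Complex.I * s)‖ := by
    rw [e1, norm_v, qq_T, Real.exp_lt_exp]; linarith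
  have a2 : ‖Complex.exp (2 * π * Complex.I * s)‖ < 1 := by
    rw [e1, norm_v, Real.exp_lt_one_iff]; linarith
  have a1' : qq (1 / (2 * t / π)) < ‖Complex.exp (2 * π * Complex.I * s')‖ := by
    rw [e2, n2, qq_T' ht, Real.exp_lt_exp, neg_lt_neg_iff, div_lt_div_iff₀ (by positivity) ht]
    have h1 := mul_lt_mul_of_pos_left hz.2 (mul_pos pi_pos ht)
    have h2 : 0 < π * π * t := by positivity
    nlinarith
  have a2' : ‖Complex.exp (2 * π * Complex.I * s')‖ < 1 := by
    rw [e2, n2, Real.exp_lt_one_iff, neg_lt_zero]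
    have := hz.1
    positivity
  have h := Fs_mod hT (s := s) (s' := s') (y := y) (by rw [hs]; ring) (by rw [hs']; ring) a1 a2 a1' a2'
  rw [e2] at h a1' a2'
  rw [heatP_eq, ← e1, h, ← R_sum (qq_pos _) (qq_lt hT') a1' a2', ← tsum_congr (S_eq_R ht z), ← Complex.ofReal_tsum]
  have e3 : (1 / ((2 * t / π : ℝ) : ℂ) ^ 2 * Complex.exp (π * ((2 * t / π : ℝ) : ℂ) / 2 - π / (2 * ((2 * t / π : ℝ) : ℂ))
      + 2 * π * y ^ 2 / ((2 * t / π : ℝ) : ℂ))) = (((Real.pi ^ 2 * Real.exp t / (4 * t ^ 2)) *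
        Real.exp (-(2 * Real.pi * z - z ^ 2) / (4 * t)) : ℝ) : ℂ) := by
    have : (π * ((2 * t / π : ℝ) : ℂ) / 2 - π / (2 * ((2 * t / π : ℝ) : ℂ))
      + 2 * π * y ^ 2 / ((2 * t / π : ℝ) : ℂ)) = t + (-(2 * π * z - z ^ 2) / (4 * t)) := by
      rw [hy]; push_cast; field_simp; ring
    rw [this, Complex.exp_add]
    push_cast
    field_simp
    ring
  rw [e3, ← Complex.ofReal_mul, Complex.ofReal_re]

end SU2

/-- Exact formula for the heat kernel on the cut-locus: for `t > 0` and `z ∈ [0, π)`,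
`p_t(0,z) = (π² e^t/(4t²)) e^{-(2πz - z²)/(4t)}
  Σ_{k∈ℤ} e^{-k(k+1)π²/t} ((2k+1) + 2k e^{-(π/(2t))(z+2kπ)}) / (1 + e^{-(π/(2t))(z+2kπ)})²`. -/
theorem stmt_10 (t : ℝ) (ht : 0 < t) (z : ℝ) (hz : z ∈ Set.Ico 0 Real.pi) :
    heatP t 0 z =
      (Real.pi ^ 2 * Real.exp t / (4 * t ^ 2)) *
        Real.exp (-(2 * Real.pi * z - z ^ 2) / (4 * t)) *
        ∑' k : ℤ, Real.exp (-((k : ℝ) * ((k : ℝ) + 1) * Real.pi ^ 2) / t) *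
          ((2 * (k : ℝ) + 1) + 2 * (k : ℝ) *
              Real.exp (-(Real.pi / (2 * t)) * (z + 2 * (k : ℝ) * Real.pi))) /
            (1 + Real.exp (-(Real.pi / (2 * t)) * (z + 2 * (k : ℝ) * Real.pi))) ^ 2 := by
  have hc : IsClosed {z : ℝ | heatP t 0 z = (Real.pi ^ 2 * Real.exp t / (4 * t ^ 2)) *
        Real.exp (-(2 * Real.pi * z - z ^ 2) / (4 * t)) * ∑' k : ℤ, SU2.S t z k} :=
    isClosed_eq (SU2.heatP_cont ht) (Continuous.mul (by fun_prop) (SU2.S_cont ht))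
  have hsub := hc.closure_subset_iff.2 (fun z hz => SU2.main_open ht hz)
  rw [closure_Ioo Real.pi_pos.ne] at hsub
  exact hsub ⟨hz.1, hz.2.le⟩
end

section
/- For every fixed r ∈ (0, π/2), the function F(θ) := θ - cos r · sin θ · arccos(cos r · cos θ) / √(1 - cos²r · cos²θ) is a strictly increasing bijection from [-π, π] onto [-π, π]; moreover its derivative at every θ equals (sin²r / (1 - u²)) · (1 - u·arccos(u)/√(1 - u²)) with u = cos r · cos θ, and this derivative is positive. -/
open Real

/-- The function `F(θ) = θ - cos r sin θ · arccos(cos r cos θ)/√(1 - cos²r cos²θ)`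
arising in the small-time asymptotics of the subelliptic heat kernel on `SU(2)`. -/
noncomputable def Fmap (r θ : ℝ) : ℝ :=
  θ - Real.cos r * Real.sin θ * Real.arccos (Real.cos r * Real.cos θ) /
    Real.sqrt (1 - Real.cos r ^ 2 * Real.cos θ ^ 2)

theorem stmt_13_hasDeriv (r : ℝ) (hr : r ∈ Set.Ioo 0 (Real.pi / 2)) (θ : ℝ) :
    HasDerivAt (Fmap r) ((Real.sin r ^ 2 / (1 - (Real.cos r * Real.cos θ) ^ 2)) *
          (1 - (Real.cos r * Real.cos θ) * Real.arccos (Real.cos r * Real.cos θ) /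
            Real.sqrt (1 - (Real.cos r * Real.cos θ) ^ 2))) θ ∧
    0 < ((Real.sin r ^ 2 / (1 - (Real.cos r * Real.cos θ) ^ 2)) *
          (1 - (Real.cos r * Real.cos θ) * Real.arccos (Real.cos r * Real.cos θ) /
            Real.sqrt (1 - (Real.cos r * Real.cos θ) ^ 2))) := by
  obtain ⟨h0, h1⟩ := hr
  have hs : 0 < Real.sin r := Real.sin_pos_of_pos_of_lt_pi h0 (by linarith [Real.pi_pos])
  have hsc := Real.sin_sq_add_cos_sq r
  have hsc' := Real.sin_sq_add_cos_sq θ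
  obtain ⟨u, hu⟩ : ∃ u, u = Real.cos r * Real.cos θ := ⟨_, rfl⟩
  have hu2 : 0 < 1 - u ^ 2 := by
    rw [hu, mul_pow]
    have : Real.cos r ^ 2 * Real.cos θ ^ 2 ≤ Real.cos r ^ 2 * 1 := by
      gcongr
      nlinarith [sq_nonneg (Real.sin θ)]
    nlinarith
  have hu1 : -1 < u := by nlinarith
  have hu1' : u < 1 := by nlinarith
  obtain ⟨s, hsdef⟩ : ∃ s, s = Real.sqrt (1 - u ^ 2) := ⟨_, rfl⟩
  have hspos : 0 < s := by rw [hsdef]; exact Real.sqrt_pos.2 hu2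
  have hssq : s ^ 2 = 1 - u ^ 2 := by rw [hsdef]; exact Real.sq_sqrt hu2.le
  have hd : HasDerivAt (fun t => Real.cos r * Real.cos t) (Real.cos r * (-Real.sin θ)) θ :=
    (Real.hasDerivAt_cos θ).const_mul _
  have hA : HasDerivAt (fun t => Real.arccos (Real.cos r * Real.cos t))
      (-(1 / s) * (Real.cos r * (-Real.sin θ))) θ := by
    have := Real.hasDerivAt_arccos (x := u) (by linarith) (by linarith)
    rw [← hsdef, hu] at this
    exact HasDerivAt.comp (h₂ := Real.arccos) (h := fun t => Real.cos r * Real.cos t) θ this hd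
  have hS : HasDerivAt (fun t => Real.sqrt (1 - Real.cos r ^ 2 * Real.cos t ^ 2))
      (-(2 * u * (Real.cos r * (-Real.sin θ))) / (2 * s)) θ := by
    have h2 : HasDerivAt (fun t => 1 - Real.cos r ^ 2 * Real.cos t ^ 2)
        (-(2 * u * (Real.cos r * (-Real.sin θ)))) θ := by
      have := (hd.pow 2).const_sub 1
      rw [hu]
      have e : (fun t => 1 - Real.cos r ^ 2 * Real.cos t ^ 2) =
          fun x => 1 - ((fun t => Real.cos r * Real.cos t) ^ 2) x := by
        funext t
        simp only [Pi.pow_apply, mul_pow]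
      rw [e]
      refine this.congr_deriv ?_
      push_cast
      ring
    have h3 := h2.sqrt (by rw [← mul_pow, ← hu]; exact hu2.ne')
    rwa [← mul_pow, ← hu, ← hsdef] at h3
  have hN := ((Real.hasDerivAt_sin θ).const_mul (Real.cos r)).mul hA
  have hSne : Real.sqrt (1 - Real.cos r ^ 2 * Real.cos θ ^ 2) = s := by
    rw [hsdef, hu, mul_pow]
  have hF := (hasDerivAt_id θ).sub (hN.div hS (by rw [hSne]; exact hspos.ne'))
  rw [hSne] at hF
  rw [← hu, ← hsdef, ← hssq]
  rw [← hu] at hF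
  constructor
  · have hF' : HasDerivAt (Fmap r) _ θ := hF
    refine hF'.congr_deriv ?_
    simp only [Pi.mul_apply]
    have e1 : Real.sin r ^ 2 = 1 - Real.cos r ^ 2 := by linarith
    have e2 : Real.cos r ^ 2 * Real.sin θ ^ 2 = Real.cos r ^ 2 - u ^ 2 := by
      rw [hu]; linear_combination Real.cos r ^ 2 * hsc'
    rw [e1, ← hu]
    generalize Real.arccos u = A at *
    field_simp
    linear_combination (s - u * A) * hssq - (s - u * A) * e2
  · have hA0 : 0 < Real.arccos u := Real.arccos_pos.2 hu1'
    have key : u * Real.arccos u < s := by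
      rcases le_or_gt u 0 with h | h
      · nlinarith
      · have h2 : Real.arccos u < Real.pi / 2 := Real.arccos_lt_pi_div_two.2 h
        have h3 := Real.lt_tan hA0 h2
        rw [Real.tan_arccos, ← hsdef, lt_div_iff₀ h] at h3
        linarith
    have : u * Real.arccos u / s < 1 := (div_lt_one hspos).2 key
    exact mul_pos (by positivity) (by linarith)

theorem stmt_13 (r : ℝ) (hr : r ∈ Set.Ioo 0 (Real.pi / 2)) :
    StrictMonoOn (Fmap r) (Set.Icc (-Real.pi) Real.pi) ∧
    Set.BijOn (Fmap r) (Set.Icc (-Real.pi) Real.pi) (Set.Icc (-Real.pi) Real.pi) ∧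
    ∀ θ : ℝ,
      deriv (Fmap r) θ =
        (Real.sin r ^ 2 / (1 - (Real.cos r * Real.cos θ) ^ 2)) *
          (1 - (Real.cos r * Real.cos θ) * Real.arccos (Real.cos r * Real.cos θ) /
            Real.sqrt (1 - (Real.cos r * Real.cos θ) ^ 2)) ∧
      0 < deriv (Fmap r) θ := by
  have hD : ∀ θ, 0 < deriv (Fmap r) θ := fun θ => by
    rw [(stmt_13_hasDeriv r hr θ).1.deriv]; exact (stmt_13_hasDeriv r hr θ).2
  have hm : StrictMono (Fmap r) := strictMono_of_deriv_pos hD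
  have hc : Continuous (Fmap r) :=
    continuous_iff_continuousAt.2 fun θ => (stmt_13_hasDeriv r hr θ).1.continuousAt
  have e1 : Fmap r Real.pi = Real.pi := by simp [Fmap]
  have e2 : Fmap r (-Real.pi) = -Real.pi := by simp [Fmap]
  refine ⟨hm.strictMonoOn _, ⟨?_, hm.injective.injOn, ?_⟩,
    fun θ => ⟨(stmt_13_hasDeriv r hr θ).1.deriv, hD θ⟩⟩
  · intro x hx
    have a := hm.monotone hx.1
    have b := hm.monotone hx.2
    rw [e2] at a
    rw [e1] at b
    exact ⟨a, b⟩
  · have := intermediate_value_Icc (by linarith [Real.pi_pos] : -Real.pi ≤ Real.pi) hc.continuousOn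
    rwa [e1, e2] at this
end

section
/- Let f be a smooth real-valued function of (r, z) ∈ (0, π/2) × ℝ. With L f = ∂²f/∂r² + 2·cot(2r)·∂f/∂r + tan²(r)·∂²f/∂z², Γ(f, g) = (∂_r f)(∂_r g) + tan²(r)·(∂_z f)(∂_z g), and Γ₂(f) := (1/2)(L(Γ(f, f)) - 2Γ(f, L f)), one has the sum-of-squares identity Γ₂(f) = (∂²f/∂r²)² + (tan²r · ∂²f/∂z² - (2/sin 2r) · ∂f/∂r)² + 2·((1/cos²r) · ∂f/∂z + tan r · ∂²f/∂r∂z)². In particular Γ₂(f) ≥ 0 at every point of (0, π/2) × ℝ. -/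
open Real

/-- Partial derivative in `r` of a function of `(r, z)`. -/
noncomputable def dR (f : ℝ → ℝ → ℝ) (r z : ℝ) : ℝ := deriv (fun r' => f r' z) r

/-- Partial derivative in `z` of a function of `(r, z)`. -/
noncomputable def dZ (f : ℝ → ℝ → ℝ) (r z : ℝ) : ℝ := deriv (fun z' => f r z') z

/-- The sublaplacian `L f = ∂²f/∂r² + 2 cot(2r) ∂f/∂r + tan²(r) ∂²f/∂z²` of `SU(2)` in
cylindric coordinates, acting on functions independent of `θ`. -/
noncomputable def subLap (f : ℝ → ℝ → ℝ) (r z : ℝ) : ℝ :=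
  dR (dR f) r z + 2 * (Real.cos (2 * r) / Real.sin (2 * r)) * dR f r z +
    Real.tan r ^ 2 * dZ (dZ f) r z

/-- The carré du champ `Γ(f,g) = (∂_r f)(∂_r g) + tan²(r)(∂_z f)(∂_z g)`. -/
noncomputable def carre (f g : ℝ → ℝ → ℝ) (r z : ℝ) : ℝ :=
  dR f r z * dR g r z + Real.tan r ^ 2 * dZ f r z * dZ g r z

/-- The iterated carré du champ `Γ₂(f) = (1/2)(L Γ(f,f) - 2 Γ(f, L f))`. -/
noncomputable def carre2 (f : ℝ → ℝ → ℝ) (r z : ℝ) : ℝ :=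
  (1 / 2) * (subLap (fun r' z' => carre f f r' z') r z -
    2 * carre f (fun r' z' => subLap f r' z') r z)

/-- The strip `(0, π/2) × ℝ`. -/
def Om : Set (ℝ × ℝ) := Set.Ioo 0 (Real.pi / 2) ×ˢ (Set.univ : Set ℝ)

/-- Smoothness on the strip. -/
def Sm (g : ℝ → ℝ → ℝ) : Prop := ContDiffOn ℝ (⊤ : ℕ∞) (fun p : ℝ × ℝ => g p.1 p.2) Om

lemma Om_open : IsOpen Om := isOpen_Ioo.prod isOpen_univ

lemma mem_Om {r : ℝ} (hr : r ∈ Set.Ioo 0 (Real.pi / 2)) (z : ℝ) : ((r, z) : ℝ × ℝ) ∈ Om :=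
  ⟨hr, trivial⟩

lemma Sm.diffAt {g : ℝ → ℝ → ℝ} (hg : Sm g) {p : ℝ × ℝ} (hp : p ∈ Om) :
    DifferentiableAt ℝ (fun p : ℝ × ℝ => g p.1 p.2) p :=
  (hg.contDiffAt (Om_open.mem_nhds hp)).differentiableAt (by simp)

lemma Sm.slR {g : ℝ → ℝ → ℝ} (hg : Sm g) {r : ℝ} (hr : r ∈ Set.Ioo 0 (Real.pi / 2)) (z : ℝ) :
    HasDerivAt (fun r' => g r' z)
      (fderiv ℝ (fun p : ℝ × ℝ => g p.1 p.2) (r, z) (1, 0)) r := by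
  have h := (hg.diffAt (mem_Om hr z)).hasFDerivAt
  have h2 : HasDerivAt (fun r' : ℝ => ((r', z) : ℝ × ℝ)) (1, 0) r :=
    (hasDerivAt_id r).prodMk (hasDerivAt_const r z)
  exact h.comp_hasDerivAt (f := fun r' : ℝ => ((r', z) : ℝ × ℝ)) r h2

lemma Sm.slZ {g : ℝ → ℝ → ℝ} (hg : Sm g) {r : ℝ} (hr : r ∈ Set.Ioo 0 (Real.pi / 2)) (z : ℝ) :
    HasDerivAt (fun z' => g r z')
      (fderiv ℝ (fun p : ℝ × ℝ => g p.1 p.2) (r, z) (0, 1)) z := by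
  have h := (hg.diffAt (mem_Om hr z)).hasFDerivAt
  have h2 : HasDerivAt (fun z' : ℝ => ((r, z') : ℝ × ℝ)) (0, 1) z :=
    (hasDerivAt_const z r).prodMk (hasDerivAt_id z)
  exact h.comp_hasDerivAt (f := fun z' : ℝ => ((r, z') : ℝ × ℝ)) z h2

lemma Sm.hR {g : ℝ → ℝ → ℝ} (hg : Sm g) {r : ℝ} (hr : r ∈ Set.Ioo 0 (Real.pi / 2)) (z : ℝ) :
    HasDerivAt (fun r' => g r' z) (dR g r z) r :=
  (hg.slR hr z).differentiableAt.hasDerivAt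

lemma Sm.hZ {g : ℝ → ℝ → ℝ} (hg : Sm g) {r : ℝ} (hr : r ∈ Set.Ioo 0 (Real.pi / 2)) (z : ℝ) :
    HasDerivAt (fun z' => g r z') (dZ g r z) z :=
  (hg.slZ hr z).differentiableAt.hasDerivAt

lemma Sm.fd {g : ℝ → ℝ → ℝ} (hg : Sm g) :
    ContDiffOn ℝ (⊤ : ℕ∞) (fderiv ℝ (fun p : ℝ × ℝ => g p.1 p.2)) Om :=
  ContDiffOn.fderiv_of_isOpen hg Om_open (by simp)

lemma Sm.dR {g : ℝ → ℝ → ℝ} (hg : Sm g) : Sm (dR g) := by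
  have h : ContDiffOn ℝ (⊤ : ℕ∞)
      (fun p => fderiv ℝ (fun p : ℝ × ℝ => g p.1 p.2) p (1, 0)) Om :=
    hg.fd.clm_apply contDiffOn_const
  exact h.congr fun p hp => (hg.slR hp.1 p.2).deriv

lemma Sm.dZ {g : ℝ → ℝ → ℝ} (hg : Sm g) : Sm (dZ g) := by
  have h : ContDiffOn ℝ (⊤ : ℕ∞)
      (fun p => fderiv ℝ (fun p : ℝ × ℝ => g p.1 p.2) p (0, 1)) Om :=
    hg.fd.clm_apply contDiffOn_const
  exact h.congr fun p hp => (hg.slZ hp.1 p.2).deriv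

lemma dR_congr {g h : ℝ → ℝ → ℝ}
    (e : ∀ r ∈ Set.Ioo 0 (Real.pi / 2), ∀ z, g r z = h r z)
    {r : ℝ} (hr : r ∈ Set.Ioo 0 (Real.pi / 2)) (z : ℝ) : dR g r z = dR h r z := by
  unfold _root_.dR
  apply Filter.EventuallyEq.deriv_eq
  filter_upwards [isOpen_Ioo.mem_nhds hr] with x hx using e x hx z

lemma dZ_congr {g h : ℝ → ℝ → ℝ}
    (e : ∀ r ∈ Set.Ioo 0 (Real.pi / 2), ∀ z, g r z = h r z)
    {r : ℝ} (hr : r ∈ Set.Ioo 0 (Real.pi / 2)) (z : ℝ) : dZ g r z = dZ h r z := by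
  unfold _root_.dZ
  congr 1
  funext z'
  exact e r hr z'

lemma Sm.comm {g : ℝ → ℝ → ℝ} (hg : Sm g) {r : ℝ} (hr : r ∈ Set.Ioo 0 (Real.pi / 2)) (z : ℝ) :
    _root_.dR (_root_.dZ g) r z = _root_.dZ (_root_.dR g) r z := by
  set G := fun p : ℝ × ℝ => g p.1 p.2 with hG
  have hd : HasFDerivAt (fderiv ℝ G) (fderiv ℝ (fderiv ℝ G) (r, z)) (r, z) :=
    ((hg.fd.contDiffAt (Om_open.mem_nhds (mem_Om hr z))).differentiableAt (by simp)).hasFDerivAt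
  have h1 : HasDerivAt (fun r' : ℝ => ((r', z) : ℝ × ℝ)) (1, 0) r :=
    (hasDerivAt_id r).prodMk (hasDerivAt_const r z)
  have h2 : HasDerivAt (fun z' : ℝ => ((r, z') : ℝ × ℝ)) (0, 1) z :=
    (hasDerivAt_const z r).prodMk (hasDerivAt_id z)
  have k1 := (hd.comp_hasDerivAt (f := fun r' : ℝ => ((r', z) : ℝ × ℝ)) r h1).clm_apply
    (hasDerivAt_const r ((0, 1) : ℝ × ℝ))
  have k2 := (hd.comp_hasDerivAt (f := fun z' : ℝ => ((r, z') : ℝ × ℝ)) z h2).clm_apply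
    (hasDerivAt_const z ((1, 0) : ℝ × ℝ))
  have e1 : _root_.dR (_root_.dZ g) r z
      = _root_.dR (fun r z => fderiv ℝ G (r, z) (0, 1)) r z :=
    dR_congr (fun r hr z => (hg.slZ hr z).deriv) hr z
  have e2 : _root_.dZ (_root_.dR g) r z
      = _root_.dZ (fun r z => fderiv ℝ G (r, z) (1, 0)) r z :=
    dZ_congr (fun r hr z => (hg.slR hr z).deriv) hr z
  have s : IsSymmSndFDerivAt ℝ G (r, z) :=
    (hg.contDiffAt (Om_open.mem_nhds (mem_Om hr z))).isSymmSndFDerivAt (by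
      simp only [minSmoothness_of_isRCLikeNormedField]
      exact WithTop.coe_le_coe.2 (le_top : (2 : ℕ∞) ≤ ⊤))
  rw [e1, e2]
  refine k1.deriv.trans (Eq.trans ?_ k2.deriv.symm)
  simpa using s.eq (1, 0) (0, 1)

lemma tan_pos' {r : ℝ} (hr : r ∈ Set.Ioo 0 (Real.pi / 2)) : 0 < Real.tan r :=
  Real.tan_pos_of_pos_of_lt_pi_div_two hr.1 hr.2

lemma cos_pos' {r : ℝ} (hr : r ∈ Set.Ioo 0 (Real.pi / 2)) : 0 < Real.cos r :=
  Real.cos_pos_of_mem_Ioo ⟨by linarith [hr.1, Real.pi_pos], hr.2⟩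

lemma sin_pos' {r : ℝ} (hr : r ∈ Set.Ioo 0 (Real.pi / 2)) : 0 < Real.sin r :=
  Real.sin_pos_of_pos_of_lt_pi hr.1 (by linarith [hr.2, Real.pi_pos])

lemma inv_cos_sq' {r : ℝ} (hr : r ∈ Set.Ioo 0 (Real.pi / 2)) :
    1 / Real.cos r ^ 2 = 1 + Real.tan r ^ 2 := by
  have := cos_pos' hr
  rw [Real.tan_eq_sin_div_cos]
  field_simp
  linarith [Real.sin_sq_add_cos_sq r]

lemma cot_two {r : ℝ} (hr : r ∈ Set.Ioo 0 (Real.pi / 2)) :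
    2 * (Real.cos (2 * r) / Real.sin (2 * r)) = (Real.tan r)⁻¹ - Real.tan r := by
  have := cos_pos' hr
  have := sin_pos' hr
  rw [Real.tan_eq_sin_div_cos, Real.cos_two_mul', Real.sin_two_mul]
  field_simp

lemma two_div_sin {r : ℝ} (hr : r ∈ Set.Ioo 0 (Real.pi / 2)) :
    2 / Real.sin (2 * r) = (Real.tan r)⁻¹ + Real.tan r := by
  have := cos_pos' hr
  have := sin_pos' hr
  rw [Real.tan_eq_sin_div_cos, Real.sin_two_mul]
  field_simp
  linarith [Real.sin_sq_add_cos_sq r]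

lemma hasDerivAt_tan' {r : ℝ} (hr : r ∈ Set.Ioo 0 (Real.pi / 2)) :
    HasDerivAt Real.tan (1 + Real.tan r ^ 2) r := by
  rw [← inv_cos_sq' hr]
  exact Real.hasDerivAt_tan (cos_pos' hr).ne'

/-- Sum-of-squares identity for `Γ₂` on `SU(2)`: for smooth `f` of `(r,z) ∈ (0,π/2) × ℝ`,
`Γ₂(f) = (∂²f/∂r²)² + (tan²r ∂²f/∂z² - (2/sin 2r) ∂f/∂r)²
  + 2((1/cos²r) ∂f/∂z + tan r ∂²f/∂r∂z)²`, so in particular `Γ₂(f) ≥ 0`. -/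
theorem stmt_16 (f : ℝ → ℝ → ℝ)
    (hf : ContDiffOn ℝ (⊤ : ℕ∞) (fun p : ℝ × ℝ => f p.1 p.2)
      (Set.Ioo 0 (Real.pi / 2) ×ˢ (Set.univ : Set ℝ)))
    (r : ℝ) (hr : r ∈ Set.Ioo 0 (Real.pi / 2)) (z : ℝ) :
    carre2 f r z =
      (dR (dR f) r z) ^ 2 +
        (Real.tan r ^ 2 * dZ (dZ f) r z - (2 / Real.sin (2 * r)) * dR f r z) ^ 2 +
        2 * ((1 / Real.cos r ^ 2) * dZ f r z + Real.tan r * dR (dZ f) r z) ^ 2 ∧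
    0 ≤ carre2 f r z := by
  have hs : Sm f := hf
  have ha := hs.dR
  have hb := hs.dZ
  have haa := ha.dR
  have haz := ha.dZ
  have hbz := hb.dZ
  have main : carre2 f r z =
      (dR (dR f) r z) ^ 2 +
        (Real.tan r ^ 2 * dZ (dZ f) r z - (2 / Real.sin (2 * r)) * dR f r z) ^ 2 +
        2 * ((1 / Real.cos r ^ 2) * dZ f r z + Real.tan r * dR (dZ f) r z) ^ 2 := by
    have R1 : ∀ r ∈ Set.Ioo 0 (Real.pi / 2), ∀ z, dR (fun r' z' => carre f f r' z') r z =
        2 * dR f r z * dR (dR f) r z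
          + 2 * Real.tan r * (1 + Real.tan r ^ 2) * dZ f r z ^ 2
          + 2 * Real.tan r ^ 2 * dZ f r z * dZ (dR f) r z := by
      intro r hr z
      have h := ((ha.hR hr z).mul (ha.hR hr z)).add
        ((((hasDerivAt_tan' hr).pow 2).mul (hb.hR hr z)).mul (hb.hR hr z))
      refine (HasDerivAt.deriv h).trans ?_
      simp only [Pi.mul_apply, Pi.pow_apply, hs.comm hr z]
      push_cast
      ring
    have R2 : dR (dR (fun r' z' => carre f f r' z')) r z =
        2 * dR (dR f) r z ^ 2 + 2 * dR f r z * dR (dR (dR f)) r z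
          + (2 + 6 * Real.tan r ^ 2) * (1 + Real.tan r ^ 2) * dZ f r z ^ 2
          + 8 * Real.tan r * (1 + Real.tan r ^ 2) * dZ f r z * dZ (dR f) r z
          + 2 * Real.tan r ^ 2 * (dZ (dR f) r z ^ 2 + dZ f r z * dZ (dR (dR f)) r z) := by
      rw [dR_congr R1 hr z]
      have ht := hasDerivAt_tan' hr
      have h := ((((ha.hR hr z).const_mul 2).mul (haa.hR hr z)).add
        (((ht.const_mul 2).mul ((ht.pow 2).const_add 1)).mul ((hb.hR hr z).pow 2))).add
        ((((ht.pow 2).const_mul 2).mul (hb.hR hr z)).mul (haz.hR hr z))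
      refine (HasDerivAt.deriv h).trans ?_
      simp only [Pi.mul_apply, Pi.pow_apply, hs.comm hr z, ha.comm hr z]
      push_cast
      ring
    have Z1 : ∀ r ∈ Set.Ioo 0 (Real.pi / 2), ∀ z, dZ (fun r' z' => carre f f r' z') r z =
        2 * dR f r z * dZ (dR f) r z
          + 2 * Real.tan r ^ 2 * dZ f r z * dZ (dZ f) r z := by
      intro r hr z
      have h := ((ha.hZ hr z).mul (ha.hZ hr z)).add
        (((hb.hZ hr z).const_mul (Real.tan r ^ 2)).mul (hb.hZ hr z))
      refine (HasDerivAt.deriv h).trans ?_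
      ring
    have Z2 : dZ (dZ (fun r' z' => carre f f r' z')) r z =
        2 * dZ (dR f) r z ^ 2 + 2 * dR f r z * dZ (dZ (dR f)) r z
          + 2 * Real.tan r ^ 2 * (dZ (dZ f) r z ^ 2 + dZ f r z * dZ (dZ (dZ f)) r z) := by
      rw [dZ_congr Z1 hr z]
      have h := (((ha.hZ hr z).const_mul 2).mul (haz.hZ hr z)).add
        (((hb.hZ hr z).const_mul (2 * Real.tan r ^ 2)).mul (hbz.hZ hr z))
      refine (HasDerivAt.deriv h).trans ?_
      ring
    have L0 : ∀ r ∈ Set.Ioo 0 (Real.pi / 2), ∀ z, subLap f r z =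
        dR (dR f) r z + ((Real.tan r)⁻¹ - Real.tan r) * dR f r z
          + Real.tan r ^ 2 * dZ (dZ f) r z := by
      intro r hr z
      rw [subLap, cot_two hr]
    have c3 : dR (dZ (dZ f)) r z = dZ (dZ (dR f)) r z := by
      rw [hb.comm hr z]
      exact dZ_congr (fun r hr z => hs.comm hr z) hr z
    have LR : dR (fun r' z' => subLap f r' z') r z =
        dR (dR (dR f)) r z + ((Real.tan r)⁻¹ - Real.tan r) * dR (dR f) r z
          + (-(1 + Real.tan r ^ 2) / Real.tan r ^ 2 - (1 + Real.tan r ^ 2)) * dR f r z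
          + 2 * Real.tan r * (1 + Real.tan r ^ 2) * dZ (dZ f) r z
          + Real.tan r ^ 2 * dZ (dZ (dR f)) r z := by
      rw [dR_congr L0 hr z]
      have ht := hasDerivAt_tan' hr
      have h := ((haa.hR hr z).add
        (((ht.inv (tan_pos' hr).ne').sub ht).mul (ha.hR hr z))).add
        ((ht.pow 2).mul (hbz.hR hr z))
      refine (HasDerivAt.deriv h).trans ?_
      simp only [Pi.mul_apply, Pi.pow_apply, Pi.sub_apply, Pi.inv_apply, c3]
      push_cast
      ring
    have LZ : dZ (fun r' z' => subLap f r' z') r z =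
        dZ (dR (dR f)) r z + ((Real.tan r)⁻¹ - Real.tan r) * dZ (dR f) r z
          + Real.tan r ^ 2 * dZ (dZ (dZ f)) r z := by
      rw [dZ_congr L0 hr z]
      have h := ((haa.hZ hr z).add
        ((ha.hZ hr z).const_mul ((Real.tan r)⁻¹ - Real.tan r))).add
        ((hbz.hZ hr z).const_mul (Real.tan r ^ 2))
      exact HasDerivAt.deriv h
    have ht := (tan_pos' hr).ne'
    rw [carre2, subLap, carre, R2, R1 r hr z, Z2, LR, LZ, cot_two hr, two_div_sin hr,
      inv_cos_sq' hr, hs.comm hr z]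
    field_simp
    ring
  refine ⟨main, ?_⟩
  rw [main]
  positivity
end
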